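/- arXiv:2501.11466 — 3 statements merged into one kernel-verified Lean document; each statement's English description precedes it below -/
import Mathlib

section
/- Let r, n be positive integers with r ≥ 2 and r ≤ n, let A be an r×n matrix over ℂ, let S ⊆ {1,…,n} with |S| = r−2, and let a < b < c < d be elements of {1,…,n} ∖ S. Then the maximal minors of A satisfy the three-term Plücker relation p_{S∪{a,c}}(A) · p_{S∪{b,d}}(A) = p_{S∪{a,b}}(A) · p_{S∪{c,d}}(A) + p_{S∪{b,c}}(A) · p_{S∪{a,d}}(A). -/
open Finset

/-- The Plücker coordinate `p_J(A)`: the determinant of the `r×r` submatrix of the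
`r×n` matrix `A` formed by the columns indexed by `J`, taken in increasing order
(and `0` if `J` does not have exactly `r` elements). -/
noncomputable def pluckerFin (r n : ℕ) (A : Matrix (Fin r) (Fin n) ℂ)
    (J : Finset (Fin n)) : ℂ :=
  if h : J.card = r then
    (A.submatrix id (fun i => ((J.orderIsoOfFin h i : J) : Fin n))).det
  else 0

/-!
Cramer's rule expresses `det M • w` through the rows `M i` with coefficients the determinants of `M`
with its `i`-th row replaced by `w`. Applying this to `M = (a, b, s)` and `w = c`, and pairing with
the linear form `x ↦ det (x, d, s)`, all terms vanish except those from the rows `a` and `b`; these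
give the three-term relation for determinants of ordered tuples. Sorting the columns `x < y`
into `S` changes the minor by `ε x * ε y`, where `ε x = (-1) ^ #{s ∈ S | s < x}`, so that each of
the three products acquires the same sign `ε a * ε b * ε c * ε d`.
-/

section Tuple

open Matrix

variable {β : Type*} {m : ℕ}

theorem update_vecCons_zero (x z : β) (t : Fin m → β) :
    Function.update (vecCons x t) 0 z = vecCons z t := by
  simp only [vecCons, Fin.update_cons_zero]

theorem update_vecCons_one (x y z : β) (t : Fin m → β) :
    Function.update (vecCons x (vecCons y t)) 1 z = vecCons x (vecCons z t) := by
  simp only [vecCons, ← Fin.succ_zero_eq_one, ← Fin.cons_update, Fin.update_cons_zero]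

theorem comp_insertNth {γ : Type*} (g : β → γ) (p : Fin (m + 1)) (x : β) (v : Fin m → β) :
    g ∘ p.insertNth x v = p.insertNth (g x) (g ∘ v) := by
  refine Fin.eq_insertNth_iff.2 ⟨?_, funext fun i ↦ ?_⟩ <;> simp [Fin.removeNth]

end Tuple

section Determinant

open Matrix

variable {R : Type*} [CommRing R]

theorem sum_det_update_smul_map_row {ι N : Type*} [Fintype ι] [DecidableEq ι]
    [AddCommMonoid N] [Module R N] (f : (ι → R) →ₗ[R] N) (v : ι → ι → R) (w : ι → R) :
    ∑ i, detRowAlternating (Function.update v i w) • f (v i) = detRowAlternating v • f w := by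
  have cramer_rows : ∑ i, cramer (of v)ᵀ w i • v i = det (of v) • w := by
    rw [← det_transpose, ← mulVec_cramer, mulVec_transpose, vecMul_eq_sum]
    rfl
  have image_cramer_rows := congrArg f cramer_rows
  simp only [map_sum, map_smul, cramer_transpose_apply] at image_cramer_rows
  exact image_cramer_rows

theorem alternatingMap_vecCons_swap {M N : Type*} [AddCommGroup M] [Module R M]
    [AddCommGroup N] [Module R N] {m : ℕ} (f : M [⋀^Fin (m + 2)]→ₗ[R] N) (x y : M)
    (s : Fin m → M) :
    f (vecCons y (vecCons x s)) = -f (vecCons x (vecCons y s)) := by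
  have insertNth_one : Fin.insertNth 1 x (vecCons y s) = vecCons y (vecCons x s) :=
    (Fin.insertNth_succ_cons 0 x y s).trans (congrArg (vecCons y) (Fin.insertNth_zero' x s))
  simpa [insertNth_one] using f.map_insertNth 1 x (vecCons y s)

theorem det_vecCons_three_term {m : ℕ} (s : Fin m → Fin (m + 2) → R) (a b c d : Fin (m + 2) → R) :
    detRowAlternating (vecCons a (vecCons c s)) * detRowAlternating (vecCons b (vecCons d s)) =
      detRowAlternating (vecCons a (vecCons b s)) * detRowAlternating (vecCons c (vecCons d s)) +
      detRowAlternating (vecCons b (vecCons c s)) *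
        detRowAlternating (vecCons a (vecCons d s)) := by
  have repeated_row (i : Fin m) : detRowAlternating (vecCons (s i) (vecCons d s)) = 0 :=
    detRowAlternating.map_eq_zero_of_eq _ (i := 0) (j := i.succ.succ) rfl (Fin.succ_ne_zero _).symm
  have exchange :
      detRowAlternating (vecCons c (vecCons b s)) * detRowAlternating (vecCons a (vecCons d s)) +
        detRowAlternating (vecCons a (vecCons c s)) * detRowAlternating (vecCons b (vecCons d s)) =
      detRowAlternating (vecCons a (vecCons b s)) *
        detRowAlternating (vecCons c (vecCons d s)) := by
    simpa [Fin.sum_univ_succ, update_vecCons_zero, update_vecCons_one, repeated_row] using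
      sum_det_update_smul_map_row
        (detRowAlternating.toMultilinearMap.toLinearMap (vecCons 0 (vecCons d s)) 0)
        (vecCons a (vecCons b s)) c
  rw [alternatingMap_vecCons_swap _ b c] at exchange
  linear_combination exchange

end Determinant

section OrderedInsertion

variable {α : Type*} [LinearOrder α] {T : Finset α} {k : ℕ}

theorem orderEmbOfFin_lt_iff_lt_card_filter (hT : #T = k) (y : α) (i : Fin k) :
    T.orderEmbOfFin hT i < y ↔ (i : ℕ) < #{t ∈ T | t < y} := by
  constructor
  · intro hi
    have initial_segment_subset :
        (Iic i).map (T.orderEmbOfFin hT).toEmbedding ⊆ {t ∈ T | t < y} := by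
      intro t ht
      obtain ⟨j, hj, rfl⟩ := mem_map.1 ht
      exact mem_filter.2 ⟨T.orderEmbOfFin_mem hT j,
        ((T.orderEmbOfFin hT).monotone (mem_Iic.1 hj)).trans_lt hi⟩
    simpa [Nat.succ_le_iff] using card_le_card initial_segment_subset
  · contrapose!
    intro hi
    have filter_subset :
        {t ∈ T | t < y} ⊆ (Iio i).map (T.orderEmbOfFin hT).toEmbedding := by
      intro t ht
      obtain ⟨htT, hty⟩ := mem_filter.1 ht
      obtain ⟨j, rfl⟩ : t ∈ Set.range (T.orderEmbOfFin hT) := by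
        rwa [range_orderEmbOfFin]
      exact mem_map_of_mem _ (mem_Iio.2 ((T.orderEmbOfFin hT).lt_iff_lt.1 (hty.trans_le hi)))
    simpa using card_le_card filter_subset

theorem orderEmbOfFin_insert {y : α} (hy : y ∉ T) (hT : #T = k) :
    ⇑((insert y T).orderEmbOfFin (by rw [card_insert_of_notMem hy, hT])) =
      Fin.insertNth (⟨#{t ∈ T | t < y}, by grind [card_filter_le]⟩ : Fin (k + 1)) y
        (T.orderEmbOfFin hT) := by
  symm
  apply orderEmbOfFin_unique
  · intro j
    rcases (Fin.range_insertNth _ _ _).subset (Set.mem_range_self j) with hj | ⟨i, hi⟩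
    · exact hj ▸ mem_insert_self y T
    · exact hi ▸ mem_insert_of_mem (T.orderEmbOfFin_mem hT i)
  · refine (Fin.strictMono_insertNth_iff _ _ _).2
      ⟨(T.orderEmbOfFin hT).strictMono, fun i hi ↦ ?_, fun i hi ↦ ?_⟩
    · exact (orderEmbOfFin_lt_iff_lt_card_filter hT y i).2 hi
    · have le_apply : y ≤ T.orderEmbOfFin hT i :=
        not_lt.1 ((orderEmbOfFin_lt_iff_lt_card_filter hT y i).not.2 (Nat.not_lt.2 hi))
      exact le_apply.lt_of_ne (ne_of_mem_of_not_mem (T.orderEmbOfFin_mem hT i) hy).symm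

theorem alternatingMap_comp_orderEmbOfFin_insert {R M N : Type*} [CommRing R]
    [AddCommGroup M] [Module R M] [AddCommGroup N] [Module R N]
    (f : M [⋀^Fin (k + 1)]→ₗ[R] N) (v : α → M) {y : α} (hy : y ∉ T) (hT : #T = k) :
    f (v ∘ (insert y T).orderEmbOfFin (by rw [card_insert_of_notMem hy, hT])) =
      (-1) ^ #{t ∈ T | t < y} • f (Matrix.vecCons (v y) (v ∘ T.orderEmbOfFin hT)) := by
  rw [orderEmbOfFin_insert hy hT, comp_insertNth, f.map_insertNth]

end OrderedInsertion

section PluckerCoordinate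

variable {R α : Type*} [CommRing R] [LinearOrder α] {r : ℕ}

/-- The Plücker coordinate `p_J(A)` over a commutative ring, for columns indexed by a linear order:
the maximal minor of `A` on the columns in `J`, taken in increasing order. As for `pluckerFin`, the
value is `0` unless `#J = r`. -/
noncomputable def pluckerCoordinate (A : Matrix (Fin r) α R) (J : Finset α) : R :=
  if h : #J = r then (A.submatrix id (J.orderEmbOfFin h)).det else 0

theorem pluckerFin_eq_pluckerCoordinate {n : ℕ} (A : Matrix (Fin r) (Fin n) ℂ)
    (J : Finset (Fin n)) : pluckerFin r n A J = pluckerCoordinate A J :=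
  rfl

theorem pluckerCoordinate_of_card_eq (A : Matrix (Fin r) α R) {J : Finset α} (hJ : #J = r) :
    pluckerCoordinate A J = Matrix.detRowAlternating (A.col ∘ J.orderEmbOfFin hJ) := by
  rw [pluckerCoordinate, dif_pos hJ, ← Matrix.det_transpose]
  rfl

theorem pluckerCoordinate_insert_insert {m : ℕ} (A : Matrix (Fin (m + 2)) α R) {S : Finset α}
    (hS : #S = m) {x y : α} (hxy : x < y) (hx : x ∉ S) (hy : y ∉ S) :
    pluckerCoordinate A (insert x (insert y S)) =
      (-1) ^ #{s ∈ S | s < x} * (-1) ^ #{s ∈ S | s < y} *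
        Matrix.detRowAlternating (Matrix.vecCons (A.col x) (Matrix.vecCons (A.col y)
          (A.col ∘ S.orderEmbOfFin hS))) := by
  have hyS : #(insert y S) = m + 1 := by rw [card_insert_of_notMem hy, hS]
  have hx' : x ∉ insert y S := by simp [hxy.ne, hx]
  have filter_lt_x : {t ∈ insert y S | t < x} = {s ∈ S | s < x} := by
    rw [filter_insert, if_neg hxy.not_gt]
  rw [pluckerCoordinate_of_card_eq A (by rw [card_insert_of_notMem hx', hyS]),
    alternatingMap_comp_orderEmbOfFin_insert _ _ hx' hyS, filter_lt_x,
    ← AlternatingMap.curryLeft_apply_apply, alternatingMap_comp_orderEmbOfFin_insert _ _ hy hS]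
  simp [mul_assoc]

theorem plucker_three_term_relation_general (A : Matrix (Fin r) α R) {S : Finset α}
    (hS : #S + 2 = r) {a b c d : α} (hab : a < b) (hbc : b < c) (hcd : c < d)
    (ha : a ∉ S) (hb : b ∉ S) (hc : c ∉ S) (hd : d ∉ S) :
    pluckerCoordinate A (insert a (insert c S)) * pluckerCoordinate A (insert b (insert d S)) =
      pluckerCoordinate A (insert a (insert b S)) * pluckerCoordinate A (insert c (insert d S)) +
      pluckerCoordinate A (insert b (insert c S)) *
        pluckerCoordinate A (insert a (insert d S)) := by
  subst hS
  have hac : a < c := hab.trans hbc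
  have hbd : b < d := hbc.trans hcd
  have had : a < d := hab.trans hbd
  rw [pluckerCoordinate_insert_insert A rfl hac ha hc,
    pluckerCoordinate_insert_insert A rfl hbd hb hd,
    pluckerCoordinate_insert_insert A rfl hab ha hb,
    pluckerCoordinate_insert_insert A rfl hcd hc hd,
    pluckerCoordinate_insert_insert A rfl hbc hb hc,
    pluckerCoordinate_insert_insert A rfl had ha hd]
  linear_combination (-1) ^ #{s ∈ S | s < a} * (-1) ^ #{s ∈ S | s < b} *
    (-1) ^ #{s ∈ S | s < c} * (-1) ^ #{s ∈ S | s < d} *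
    det_vecCons_three_term (A.col ∘ S.orderEmbOfFin rfl) (A.col a) (A.col b) (A.col c) (A.col d)

end PluckerCoordinate

/-- the three-term Plücker relation for maximal minors. -/
theorem plucker_three_term_relation
    (r n : ℕ) (hr : 2 ≤ r) (hrn : r ≤ n)
    (A : Matrix (Fin r) (Fin n) ℂ)
    (S : Finset (Fin n)) (hS : S.card = r - 2)
    (a b c d : Fin n) (hab : a < b) (hbc : b < c) (hcd : c < d)
    (ha : a ∉ S) (hb : b ∉ S) (hc : c ∉ S) (hd : d ∉ S) :
    pluckerFin r n A (insert a (insert c S)) * pluckerFin r n A (insert b (insert d S)) =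
      pluckerFin r n A (insert a (insert b S)) * pluckerFin r n A (insert c (insert d S)) +
      pluckerFin r n A (insert b (insert c S)) * pluckerFin r n A (insert a (insert d S)) := by
  simp only [pluckerFin_eq_pluckerCoordinate]
  exact plucker_three_term_relation_general A (by omega) hab hbc hcd ha hb hc hd
end

section
/- Let n ≥ 4 and 2 ≤ k ≤ n−2 be integers, let A be an (n−k)×n matrix over ℂ with y_{i,j}(A) ≠ 0 for all 0 ≤ i ≤ n−k and 0 ≤ j ≤ k, and let c be an integer with −⌈(k−2)/2⌉ ≤ c ≤ ⌊(n−k−2)/2⌋. Then p_{J⁺_{k+c}}(A) / p_{J_{k+c}}(A) = Σ_{(a,b) : a−b = 2c, 0 ≤ a ≤ n−k−1, 1 ≤ b ≤ k−1} ( y_{a,b+1} y_{a+1,b−1} )/( y_{a,b} y_{a+1,b} ) + Σ_{(a,b) : a−b = 2c, 1 ≤ a ≤ n−k−1, 1 ≤ b ≤ k} ( y_{a−1,b} y_{a+1,b−1} )/( y_{a,b−1} y_{a,b} ), where all y's are evaluated at A. -/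
open Finset

/-- The set `[m] = {1, …, m} ⊆ ℤ/nℤ` (with `[0] = ∅`). -/
def seg (n m : ℕ) : Finset (ZMod n) := (Finset.Icc 1 m).image (fun t : ℕ => (t : ZMod n))

/-- The Plücker coordinate `p_J(A)` of an `r×n` matrix `A` whose columns are indexed by
`ℤ/nℤ`: the determinant of the `r×r` submatrix of `A` formed by the columns indexed by
`J`, ordered by the representatives `1, …, n` in increasing order (and `0` if `J` does
not have exactly `r` elements).  The auxiliary key `x ↦ (x−1).val` is order-isomorphic
to the representative in `{1, …, n}`. -/
noncomputable def plucker (n r : ℕ) (A : Matrix (Fin r) (ZMod n) ℂ)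
    (J : Finset (ZMod n)) : ℂ :=
  if h : (J.image (fun x => (x - 1).val)).card = r then
    (A.submatrix id
      (fun i => ((((J.image (fun x => (x - 1).val)).orderIsoOfFin h i :
        (J.image (fun x => (x - 1).val))) : ℕ) : ZMod n) + 1)).det
  else 0

/-- The cyclic interval `J_i = {i+1, …, i+(n−k)} ⊆ ℤ/nℤ`. -/
def Jcyc (n k : ℕ) (i : ZMod n) : Finset (ZMod n) :=
  (Finset.Icc 1 (n - k)).image (fun t : ℕ => i + (t : ZMod n))

/-- `J_i⁺ = (J_i ∖ {i+n−k}) ∪ {i+n−k+1}`. -/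
def Jplus (n k : ℕ) (i : ZMod n) : Finset (ZMod n) :=
  insert (i + (((n - k + 1 : ℕ)) : ZMod n)) ((Jcyc n k i).erase (i + (((n - k : ℕ)) : ZMod n)))

/-- The checkboard label `J^ch_{i,j} = σ^{−⌈(i+j)/2⌉}( [i] ∪ ([n−k+j]∖[i+j]) )`. -/
def Jch (k n i j : ℕ) : Finset (ZMod n) :=
  (seg n i ∪ (seg n (n - k + j) \ seg n (i + j))).image
    (fun x => x - (((i + j + 1) / 2 : ℕ) : ZMod n))

/-- The Plücker coordinates `y_{i,j}` attached to the checkboard graph. -/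
noncomputable def ych (k n : ℕ) (A : Matrix (Fin (n - k)) (ZMod n) ℂ) (i j : ℕ) : ℂ :=
  plucker n (n - k) A (Jch k n i j)

/-- First sum appearing in the superpotential formulas:
`Σ_{a−b=d, 0 ≤ a ≤ n−k−1, 1 ≤ b ≤ k−1} (y_{a,b+1} y_{a+1,b−1})/(y_{a,b} y_{a+1,b})`. -/
noncomputable def sumA (k n : ℕ) (y : ℕ → ℕ → ℂ) (d : ℤ) : ℂ :=
  ∑ p ∈ ((Finset.range (n - k)) ×ˢ (Finset.Icc 1 (k - 1))).filter
      (fun p => (p.1 : ℤ) - (p.2 : ℤ) = d),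
    (y p.1 (p.2 + 1) * y (p.1 + 1) (p.2 - 1)) / (y p.1 p.2 * y (p.1 + 1) p.2)

/-- Second sum appearing in the superpotential formulas:
`Σ_{a−b=d, 1 ≤ a ≤ n−k−1, 1 ≤ b ≤ k} (y_{a−1,b} y_{a+1,b−1})/(y_{a,b−1} y_{a,b})`. -/
noncomputable def sumB (k n : ℕ) (y : ℕ → ℕ → ℂ) (d : ℤ) : ℂ :=
  ∑ p ∈ ((Finset.Icc 1 (n - k - 1)) ×ˢ (Finset.Icc 1 k)).filter
      (fun p => (p.1 : ℤ) - (p.2 : ℤ) = d),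
    (y (p.1 - 1) p.2 * y (p.1 + 1) (p.2 - 1)) / (y p.1 (p.2 - 1) * y p.1 p.2)

/-!
Write `a = s + c`, `b = s - c` for the squares of the diagonal `a - b = 2c`. Each label met by the
staircase `(a, b - 1) → (a, b) → (a + 1, b)` contains the column `c`; consider the factor by which
its Plücker coordinate changes when `c` is replaced by `c + 1`. Two consecutive labels share all
but one column, so a three-term Plücker relation evaluates the difference of their factors: it is
a summand of the second sum for the step `(a, b - 1) → (a, b)` and a summand of the first sum for
`(a, b) → (a + 1, b)`. The staircase starts at a label whose factor is zero or a single summand of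
the first sum, and ends at the boundary of the rectangle, where the label is the cyclic interval
`J_{k+c}` with last column `c`, so that the sums telescope to `p(J⁺_{k+c}) / p(J_{k+c})`.
-/

section Determinants

open Matrix

variable {R : Type*} [CommRing R]

theorem sum_mul_det_succAbove_eq_zero {r : ℕ} (φ : (Fin r → R) →ₗ[R] R)
    (v : Fin (r + 1) → Fin r → R) :
    ∑ i : Fin (r + 1), (-1) ^ (i : ℕ) * φ (v i) * (of (v ∘ i.succAbove)).det = 0 := by
  let M : Matrix (Fin (r + 1)) (Fin (r + 1)) R := of fun i => vecCons (φ (v i)) (v i)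
  let relation : Fin (r + 1) → R := vecCons 1 fun j => -φ fun l => if j = l then 1 else 0
  have mulVec_relation : M *ᵥ relation = 0 := by
    ext i
    simp [M, relation, mulVec, dotProduct, Fin.sum_univ_succ, φ.pi_apply_eq_sum_univ (v i)]
  have det_eq_zero : M.det = 0 :=
    det_eq_zero_of_mulVec_eq_zero_of_mem_nonZeroDivisors (i := 0) mulVec_relation
      (one_mem (nonZeroDivisors R))
  rwa [det_succ_column_zero] at det_eq_zero

theorem det_threeTerm {m : ℕ} (e : Fin m → Fin (m + 2) → R) (w x y z : Fin (m + 2) → R) :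
    (of (vecCons w (vecCons y e))).det * (of (vecCons x (vecCons z e))).det =
      (of (vecCons w (vecCons x e))).det * (of (vecCons y (vecCons z e))).det +
        (of (vecCons w (vecCons z e))).det * (of (vecCons x (vecCons y e))).det := by
  let φ : (Fin (m + 2) → R) →ₗ[R] R :=
    detRowAlternating.toMultilinearMap.toLinearMap (vecCons 0 (vecCons z e)) 0
  have φ_apply (u) : φ u = (of (vecCons u (vecCons z e))).det :=
    congrArg det (Fin.update_cons_zero (α := fun _ => Fin (m + 2) → R) 0 (vecCons z e) u)
  have det_repeated (i) : (of (vecCons (e i) (vecCons z e))).det = 0 :=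
    det_zero_of_row_eq (i := 0) (j := i.succ.succ) (Fin.succ_ne_zero _).symm (by ext; rfl)
  have omit_zero : vecCons w (vecCons x (vecCons y e)) ∘ Fin.succ = vecCons x (vecCons y e) := rfl
  have omit_one : vecCons w (vecCons x (vecCons y e)) ∘ Fin.succAbove 1 =
      vecCons w (vecCons y e) := by
    ext i : 1
    cases i using Fin.cases <;> rfl
  have omit_two : vecCons w (vecCons x (vecCons y e)) ∘ Fin.succAbove 2 =
      vecCons w (vecCons x e) := by
    ext i : 1
    refine Fin.cases rfl (fun i => ?_) i
    cases i using Fin.cases <;> rfl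
  have relation : (of (vecCons w (vecCons z e))).det * (of (vecCons x (vecCons y e))).det -
      (of (vecCons x (vecCons z e))).det * (of (vecCons w (vecCons y e))).det +
      (of (vecCons y (vecCons z e))).det * (of (vecCons w (vecCons x e))).det = 0 := by
    simpa [Fin.sum_univ_succ, φ_apply, omit_zero, omit_one, omit_two, det_repeated,
      sub_eq_add_neg, add_assoc]
      using sum_mul_det_succAbove_eq_zero φ (vecCons w (vecCons x (vecCons y e)))
  linear_combination -relation

end Determinants

section Plucker

variable {n r m : ℕ}

/-- The number `(x - 1).val ∈ {0, …, n - 1}` by which `plucker` orders the columns. -/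
def columnKey (x : ZMod n) : ℕ := (x - 1).val

/-- The sign of a sequence of columns: `±1` according to the parity of the permutation sorting it
by `columnKey`, and `0` if a column is repeated. Encoding it as the sign of a Vandermonde
determinant makes it visibly a product over pairs of positions. -/
def columnSign (g : Fin r → ZMod n) : ℤ :=
  (Matrix.vandermonde fun i => (columnKey (g i) : ℤ)).det.sign

theorem columnSign_eq_one {g : Fin r → ZMod n} (hg : StrictMono (columnKey ∘ g)) :
    columnSign g = 1 := by
  rw [columnSign, Int.sign_eq_one_iff_pos, Matrix.det_vandermonde]
  refine prod_pos fun i _ => prod_pos fun j hj => ?_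
  have key_lt : columnKey (g i) < columnKey (g j) := hg (mem_Ioi.mp hj)
  omega

theorem columnSign_comp_perm (g : Fin r → ZMod n) (σ : Equiv.Perm (Fin r)) :
    columnSign (g ∘ σ) = Equiv.Perm.sign σ * columnSign g := by
  have det_comp : (Matrix.vandermonde fun i => (columnKey ((g ∘ σ) i) : ℤ)).det =
      Equiv.Perm.sign σ * (Matrix.vandermonde fun i => (columnKey (g i) : ℤ)).det :=
    Matrix.det_permute σ (Matrix.vandermonde fun i => (columnKey (g i) : ℤ))
  rw [columnSign, det_comp, Int.sign_mul, columnSign]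
  rcases Int.units_eq_one_or (Equiv.Perm.sign σ) with hσ | hσ <;> simp [hσ]

theorem columnSign_vecCons_vecCons (u v : ZMod n) (e : Fin m → ZMod n) :
    columnSign (Matrix.vecCons u (Matrix.vecCons v e)) =
      ((columnKey v : ℤ) - columnKey u).sign * (∏ i, ((columnKey (e i) : ℤ) - columnKey u)).sign *
        (∏ i, ((columnKey (e i) : ℤ) - columnKey v)).sign * columnSign e := by
  simp only [columnSign, Matrix.det_vandermonde, Fin.prod_univ_succ, Fin.prod_Ioi_zero,
    Fin.prod_Ioi_succ, Matrix.cons_val_zero, Matrix.cons_val_succ, Int.sign_mul]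
  ring

variable [NeZero n]

theorem columnKey_injective : Function.Injective (columnKey : ZMod n → ℕ) :=
  (ZMod.val_injective n).comp (sub_left_injective (b := 1))

theorem natCast_columnKey_add_one (x : ZMod n) : (columnKey x : ZMod n) + 1 = x := by
  rw [columnKey, ZMod.natCast_zmod_val, sub_add_cancel]

theorem plucker_eq_zero_of_card_ne (A : Matrix (Fin r) (ZMod n) ℂ) {J : Finset (ZMod n)}
    (hJ : #J ≠ r) : plucker n r A J = 0 :=
  dif_neg fun card_keys =>
    hJ ((card_image_of_injective J columnKey_injective).symm.trans card_keys)

theorem plucker_image_of_strictMono (A : Matrix (Fin r) (ZMod n) ℂ) {g : Fin r → ZMod n}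
    (hg : StrictMono (columnKey ∘ g)) :
    plucker n r A (univ.image g) = (Matrix.of fun i => A.col (g i)).det := by
  have image_key : (univ.image g).image columnKey = univ.image (columnKey ∘ g) := image_image
  have card_keys : #((univ.image g).image columnKey) = r := by
    rw [image_key, card_image_of_injective _ hg.injective, card_univ, Fintype.card_fin]
  have sorted : columnKey ∘ g = ((univ.image g).image columnKey).orderEmbOfFin card_keys :=
    orderEmbOfFin_unique card_keys (fun i => by simp) hg
  have column_eq (i) :
      (((univ.image g).image columnKey).orderEmbOfFin card_keys i : ZMod n) + 1 = g i := by
    rw [← congrFun sorted i, Function.comp_apply, natCast_columnKey_add_one]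
  rw [← Matrix.det_transpose]
  refine (dif_pos card_keys).trans (congrArg Matrix.det ?_)
  ext i j
  exact congrArg (A i) (column_eq j)

theorem exists_perm_strictMono_columnKey {g : Fin r → ZMod n} (hg : Function.Injective g) :
    ∃ σ : Equiv.Perm (Fin r), StrictMono (columnKey ∘ g ∘ σ) :=
  ⟨Tuple.sort (columnKey ∘ g), (Tuple.monotone_sort (columnKey ∘ g)).strictMono_of_injective <|
    columnKey_injective.comp <| hg.comp (Equiv.injective _)⟩

theorem plucker_image (A : Matrix (Fin r) (ZMod n) ℂ) (g : Fin r → ZMod n) :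
    plucker n r A (univ.image g) = columnSign g * (Matrix.of fun i => A.col (g i)).det := by
  by_cases hg : Function.Injective g
  · obtain ⟨σ, hσ⟩ := exists_perm_strictMono_columnKey hg
    have image_comp : univ.image (g ∘ σ) = univ.image g := by
      rw [← image_image, image_univ_equiv]
    have det_comp : (Matrix.of fun i => A.col ((g ∘ σ) i)).det =
        Equiv.Perm.sign σ * (Matrix.of fun i => A.col (g i)).det :=
      Matrix.det_permute σ (Matrix.of fun i => A.col (g i))
    have sign_eq : columnSign g = Equiv.Perm.sign σ := by
      rw [← mul_one (Equiv.Perm.sign σ : ℤ), ← columnSign_eq_one hσ, columnSign_comp_perm,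
        ← mul_assoc, Int.units_coe_mul_self, one_mul]
    rw [← image_comp, plucker_image_of_strictMono A hσ, det_comp, sign_eq]
  · obtain ⟨i, j, hij, hne⟩ : ∃ i j, g i = g j ∧ i ≠ j := by
      simpa [Function.Injective] using hg
    have det_eq_zero : (Matrix.of fun i => A.col (g i)).det = 0 :=
      Matrix.det_zero_of_row_eq hne (congrArg A.col hij)
    rw [det_eq_zero, mul_zero]
    refine plucker_eq_zero_of_card_ne A fun hcard => hg ?_
    rw [← Set.injOn_univ, ← coe_univ, ← card_image_iff, hcard, card_univ, Fintype.card_fin]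

theorem plucker_insert_insert (A : Matrix (Fin (m + 2)) (ZMod n) ℂ) (e : Fin m → ZMod n)
    {u v : ZMod n} (huv : columnKey u ≤ columnKey v) :
    plucker n (m + 2) A (insert u (insert v (univ.image e))) =
      (∏ i, ((columnKey (e i) : ℤ) - columnKey u)).sign *
        (∏ i, ((columnKey (e i) : ℤ) - columnKey v)).sign * columnSign e *
        (Matrix.of (Matrix.vecCons (A.col u) (Matrix.vecCons (A.col v) (A.col ∘ e)))).det := by
  have image_eq : univ.image (Matrix.vecCons u (Matrix.vecCons v e)) =
      insert u (insert v (univ.image e)) := by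
    ext x
    simp [Fin.exists_fin_succ, eq_comm]
  have rows_eq : (fun i => A.col (Matrix.vecCons u (Matrix.vecCons v e) i)) =
      Matrix.vecCons (A.col u) (Matrix.vecCons (A.col v) (A.col ∘ e)) := by
    ext i : 1
    refine Fin.cases rfl (fun i => ?_) i
    cases i using Fin.cases <;> rfl
  rw [← image_eq, plucker_image, rows_eq, columnSign_vecCons_vecCons]
  rcases huv.eq_or_lt with heq | hlt
  · have det_eq_zero :
        (Matrix.of (Matrix.vecCons (A.col u) (Matrix.vecCons (A.col v) (A.col ∘ e)))).det = 0 :=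
      Matrix.det_zero_of_row_eq (i := 0) (j := 1) Fin.zero_ne_one
        (congrArg A.col (columnKey_injective heq))
    rw [det_eq_zero, mul_zero, mul_zero]
  · rw [Int.sign_eq_one_of_pos (by omega : (0 : ℤ) < columnKey v - columnKey u)]
    push_cast
    ring

theorem plucker_threeTerm_of_columnKey_le (A : Matrix (Fin (m + 2)) (ZMod n) ℂ)
    (e : Fin m → ZMod n) {w x y z : ZMod n} (hwx : columnKey w ≤ columnKey x)
    (hxy : columnKey x ≤ columnKey y) (hyz : columnKey y ≤ columnKey z) :
    plucker n (m + 2) A (insert w (insert y (univ.image e))) *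
        plucker n (m + 2) A (insert x (insert z (univ.image e))) =
      plucker n (m + 2) A (insert w (insert x (univ.image e))) *
          plucker n (m + 2) A (insert y (insert z (univ.image e))) +
        plucker n (m + 2) A (insert w (insert z (univ.image e))) *
          plucker n (m + 2) A (insert x (insert y (univ.image e))) := by
  have relation := det_threeTerm (A.col ∘ e) (A.col w) (A.col x) (A.col y) (A.col z)
  simp only [plucker_insert_insert A e hwx, plucker_insert_insert A e hxy,
    plucker_insert_insert A e hyz, plucker_insert_insert A e (hwx.trans hxy),
    plucker_insert_insert A e (hxy.trans hyz),
    plucker_insert_insert A e ((hwx.trans hxy).trans hyz)]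
  let sign (u : ZMod n) : ℂ := ((∏ i, ((columnKey (e i) : ℤ) - columnKey u)).sign : ℤ)
  linear_combination sign w * sign x * sign y * sign z * (columnSign e : ℂ) ^ 2 * relation

theorem columnKey_intCast (u : ℤ) : (columnKey (u : ZMod n) : ℤ) = (u - 1) % n := by
  rw [columnKey, ← Int.cast_one, ← Int.cast_sub, ZMod.val_intCast]

theorem columnKey_intCast_le {u v : ℤ} (huv : u ≤ v) (hdiv : (u - 1) / n = (v - 1) / n) :
    columnKey (u : ZMod n) ≤ columnKey (v : ZMod n) := by
  zify
  rw [columnKey_intCast, columnKey_intCast, Int.emod_def, Int.emod_def, hdiv]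
  omega

theorem columnKey_intCast_le_of_wrap {u v : ℤ} (huv : u ≤ v + n)
    (hdiv : (u - 1) / n = (v - 1) / n + 1) :
    columnKey (u : ZMod n) ≤ columnKey (v : ZMod n) := by
  zify
  rw [columnKey_intCast, columnKey_intCast, Int.emod_def, Int.emod_def, hdiv, mul_add]
  omega

theorem columnKey_intCast_cyclic_order {w x y z : ℤ} (hwx : w ≤ x) (hxy : x ≤ y) (hyz : y ≤ z)
    (hzw : z ≤ w + n) :
    let key (u : ℤ) := columnKey (u : ZMod n)
    key w ≤ key x ∧ key x ≤ key y ∧ key y ≤ key z ∨ key z ≤ key w ∧ key w ≤ key x ∧ key x ≤ key y ∨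
      key y ≤ key z ∧ key z ≤ key w ∧ key w ≤ key x ∨
      key x ≤ key y ∧ key y ≤ key z ∧ key z ≤ key w := by
  have n_pos : (0 : ℤ) < n := mod_cast NeZero.pos n
  have div_mono {u v : ℤ} (huv : u ≤ v) : (u - 1) / n ≤ (v - 1) / n :=
    Int.ediv_le_ediv n_pos (by omega)
  have div_wx := div_mono hwx
  have div_xy := div_mono hxy
  have div_yz := div_mono hyz
  have div_zw : (z - 1) / n ≤ (w - 1) / n + 1 := by
    rw [← Int.add_mul_ediv_right _ 1 n_pos.ne', one_mul]
    exact Int.ediv_le_ediv n_pos (by omega)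
  obtain no_wrap | wrap_z | wrap_y | wrap_x : (z - 1) / n = (w - 1) / n ∨
      ((y - 1) / n = (w - 1) / n ∧ (z - 1) / n = (w - 1) / n + 1) ∨
      ((x - 1) / n = (w - 1) / n ∧ (y - 1) / n = (w - 1) / n + 1) ∨
      (x - 1) / n = (w - 1) / n + 1 := by omega
  · exact .inl ⟨columnKey_intCast_le hwx (by omega), columnKey_intCast_le hxy (by omega),
      columnKey_intCast_le hyz (by omega)⟩
  · exact .inr <| .inl ⟨columnKey_intCast_le_of_wrap hzw (by omega),
      columnKey_intCast_le hwx (by omega), columnKey_intCast_le hxy (by omega)⟩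
  · exact .inr <| .inr <| .inl ⟨columnKey_intCast_le hyz (by omega),
      columnKey_intCast_le_of_wrap hzw (by omega), columnKey_intCast_le hwx (by omega)⟩
  · exact .inr <| .inr <| .inr ⟨columnKey_intCast_le hxy (by omega),
      columnKey_intCast_le hyz (by omega), columnKey_intCast_le_of_wrap hzw (by omega)⟩

/-- `w ≤ x ≤ y ≤ z ≤ w + n` says that the four columns are in cyclic order. -/
theorem plucker_threeTerm (A : Matrix (Fin r) (ZMod n) ℂ) {K : Finset (ZMod n)} (hK : #K + 2 = r)
    {w x y z : ℤ} (hwx : w ≤ x) (hxy : x ≤ y) (hyz : y ≤ z) (hzw : z ≤ w + n) :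
    plucker n r A (insert (w : ZMod n) (insert (y : ZMod n) K)) *
        plucker n r A (insert (x : ZMod n) (insert (z : ZMod n) K)) =
      plucker n r A (insert (w : ZMod n) (insert (x : ZMod n) K)) *
          plucker n r A (insert (y : ZMod n) (insert (z : ZMod n) K)) +
        plucker n r A (insert (w : ZMod n) (insert (z : ZMod n) K)) *
          plucker n r A (insert (x : ZMod n) (insert (y : ZMod n) K)) := by
  obtain ⟨m, rfl⟩ : ∃ m, r = m + 2 := ⟨#K, hK.symm⟩
  obtain ⟨e, rfl⟩ : ∃ e : Fin m → ZMod n, univ.image e = K := by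
    refine ⟨Subtype.val ∘ (K.equivFinOfCardEq (Nat.add_right_cancel hK)).symm, ?_⟩
    rw [← image_image, image_univ_equiv, univ_eq_attach, attach_image_val]
  rcases columnKey_intCast_cyclic_order hwx hxy hyz hzw with
    ⟨hwx, hxy, hyz⟩ | ⟨hzw, hwx, hxy⟩ | ⟨hyz, hzw, hwx⟩ | ⟨hxy, hyz, hzw⟩
  · exact plucker_threeTerm_of_columnKey_le A e hwx hxy hyz
  · have relation := plucker_threeTerm_of_columnKey_le A e hzw hwx hxy
    simp only [insert_comm (z : ZMod n)] at relation
    linear_combination relation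
  · have relation := plucker_threeTerm_of_columnKey_le A e hyz hzw hwx
    simp only [insert_comm (y : ZMod n) w, insert_comm (y : ZMod n) x, insert_comm (z : ZMod n) w,
      insert_comm (z : ZMod n) x] at relation
    linear_combination relation
  · have relation := plucker_threeTerm_of_columnKey_le A e hxy hyz hzw
    simp only [insert_comm _ (w : ZMod n)] at relation
    linear_combination relation

end Plucker

section Labels

variable {n k : ℕ}

theorem injOn_intCast_Ico (t : ℤ) : Set.InjOn (Int.cast : ℤ → ZMod n) (Ico t (t + n)) := by
  intro u hu v hv huv
  rw [coe_Ico, Set.mem_Ico] at hu hv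
  rw [ZMod.intCast_eq_intCast_iff_dvd_sub] at huv
  have sub_eq_zero : v - u = 0 := Int.eq_zero_of_abs_lt_dvd huv (abs_lt.mpr (by omega))
  omega

theorem image_intCast_Icc_add (u v t : ℤ) :
    (Icc (u + t) (v + t)).image (Int.cast : ℤ → ZMod n) =
      ((Icc u v).image Int.cast).image fun x : ZMod n => x + t := by
  rw [← image_add_right_Icc, image_image, image_image]
  exact image_congr fun x _ => Int.cast_add x t

theorem image_intCast_Icc_add_natCast (u v : ℤ) :
    (Icc (u + n) (v + n)).image (Int.cast : ℤ → ZMod n) = (Icc u v).image Int.cast := by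
  simp only [image_intCast_Icc_add, Int.cast_natCast, ZMod.natCast_self, add_zero, image_id']

theorem seg_eq_image_intCast (m : ℕ) : seg n m = (Icc (1 : ℤ) m).image Int.cast := by
  have Icc_eq : Icc (1 : ℤ) m = (Icc 1 m).image Nat.cast := by
    ext x
    simp only [mem_Icc, mem_image]
    exact ⟨fun hx => ⟨x.toNat, by omega⟩, by omega⟩
  rw [Icc_eq, image_image]
  exact image_congr fun x _ => (Int.cast_natCast x).symm

theorem Jcyc_intCast (hkn : k ≤ n) (u : ℤ) :
    Jcyc n k (u : ZMod n) = (Icc (u + 1) (u + (n - k))).image Int.cast := by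
  have Jcyc_eq : Jcyc n k (u : ZMod n) = (seg n (n - k)).image fun x : ZMod n => x + u := by
    rw [seg, image_image]
    exact image_congr fun x _ => add_comm (u : ZMod n) x
  rw [Jcyc_eq, seg_eq_image_intCast, ← image_intCast_Icc_add, Nat.cast_sub hkn, add_comm 1 u,
    add_comm _ u]

theorem Jcyc_intCast_eq_insert (hkn : k < n) (u : ℤ) :
    Jcyc n k (u : ZMod n) = insert ((u + (n - k) : ℤ) : ZMod n)
      ((Icc (u + 1) (u + (n - k) - 1)).image Int.cast) := by
  rw [Jcyc_intCast hkn.le, ← image_insert]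
  congr 1
  ext x
  simp only [mem_insert, mem_Icc]
  omega

theorem Jplus_intCast_eq_insert (hkn : k < n) (u : ℤ) :
    Jplus n k (u : ZMod n) = insert ((u + (n - k) + 1 : ℤ) : ZMod n)
      ((Icc (u + 1) (u + (n - k) - 1)).image Int.cast) := by
  have last_notMem : ((u + (n - k) : ℤ) : ZMod n) ∉
      (Icc (u + 1) (u + (n - k) - 1)).image (Int.cast : ℤ → ZMod n) := by
    simp only [mem_image, mem_Icc, not_exists, not_and]
    intro v hv hcast
    have v_eq : v = u + (n - k) := by
      refine injOn_intCast_Ico (u + 1) ?_ ?_ hcast <;>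
      · rw [coe_Ico, Set.mem_Ico]
        omega
    omega
  have last_eq : (u : ZMod n) + ((n - k : ℕ) : ZMod n) = ((u + (n - k) : ℤ) : ZMod n) := by
    push_cast [Nat.cast_sub hkn.le]
    rfl
  have next_eq :
      (u : ZMod n) + ((n - k + 1 : ℕ) : ZMod n) = ((u + (n - k) + 1 : ℤ) : ZMod n) := by
    push_cast [Nat.cast_sub hkn.le]
    ring
  rw [Jplus, last_eq, next_eq, Jcyc_intCast_eq_insert hkn, erase_insert last_notMem]

theorem Jch_eq_image_intCast (hkn : k ≤ n) {i j : ℕ} (hi : i ≤ n - k) (hj : j ≤ k) {t : ℤ}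
    (ht : ((i : ℤ) + j + 1) / 2 = t) :
    Jch k n i j =
      (Icc (1 - t) (i - t) ∪ Icc (i + j + 1 - t) (n - k + j - t)).image Int.cast := by
  have sdiff_eq : seg n (n - k + j) \ seg n (i + j) =
      (Icc (i + j + 1 : ℤ) (n - k + j)).image Int.cast := by
    have Icc_subset : Icc (1 : ℤ) (n - k + j : ℕ) ⊆ Ico 1 (1 + n) := fun x => by
      simp only [mem_Icc, mem_Ico]
      omega
    rw [seg_eq_image_intCast, seg_eq_image_intCast,
      ← image_sdiff_of_injOn ((injOn_intCast_Ico 1).mono (coe_subset.mpr Icc_subset))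
        (Icc_subset_Icc_right (by omega))]
    congr 1
    ext x
    simp only [mem_sdiff, mem_Icc]
    omega
  have natCast_t : (((i + j + 1) / 2 : ℕ) : ZMod n) = (t : ZMod n) := by
    rw [← ht]
    norm_cast
  rw [Jch, sdiff_eq, seg_eq_image_intCast, natCast_t, image_union, image_union]
  simp only [sub_eq_add_neg _ t, image_intCast_Icc_add, sub_eq_add_neg _ (t : ZMod n),
    Int.cast_neg]

end Labels

section Staircase

variable {n k a b : ℕ} {c s : ℤ}

/-- The columns common to the labels at `(a, b)`, `(a + 1, b)`, `(a, b + 1)`, `(a + 1, b - 1)`,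
`(a, b - 1)` and `(a - 1, b)`, where `a = s + c` and `b = s - c`; each of these labels adds two
columns to it. -/
noncomputable def squareCore (n k : ℕ) (c s : ℤ) : Finset (ZMod n) :=
  (Icc (1 - s) (c - 1) ∪ Icc (s + 1) (n - k - c - 1)).image Int.cast

/-- The label at `(s + c + 1, s - c)` with its column `c` removed. -/
noncomputable def puncturedLabel (n k : ℕ) (c s : ℤ) : Finset (ZMod n) :=
  (Icc (-s) (c - 1) ∪ Icc (s + 1) (n - k - c - 1)).image Int.cast

theorem card_squareCore_add_two (ha : (a : ℤ) = s + c) (hb : (b : ℤ) = s - c) (ha_pos : 1 ≤ a)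
    (han : a < n - k) (hbk : b ≤ k) : #(squareCore n k c s) + 2 = n - k := by
  have disj : Disjoint (Icc (1 - s) (c - 1)) (Icc (s + 1) ((n : ℤ) - k - c - 1)) := by
    rw [disjoint_left]
    simp only [mem_Icc]
    omega
  have subset : Icc (1 - s) (c - 1) ∪ Icc (s + 1) ((n : ℤ) - k - c - 1) ⊆
      Ico (1 - s) (1 - s + n) := fun x => by
    simp only [mem_union, mem_Icc, mem_Ico]
    omega
  rw [squareCore, card_image_of_injOn ((injOn_intCast_Ico (1 - s)).mono (coe_subset.mpr subset)),
    card_union_of_disjoint disj, Int.card_Icc, Int.card_Icc]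
  omega

theorem intCast_natCast_sub (s : ℤ) : ((n - s : ℤ) : ZMod n) = ((-s : ℤ) : ZMod n) := by
  simp

theorem puncturedLabel_eq_insert (hsc : 1 ≤ s + c) :
    puncturedLabel n k c s = insert ((n - s : ℤ) : ZMod n) (squareCore n k c s) := by
  rw [squareCore, intCast_natCast_sub, ← image_insert, puncturedLabel]
  congr 1
  ext x
  simp only [mem_union, mem_insert, mem_Icc]
  omega

theorem puncturedLabel_sub_one_eq_insert (hsc : s + c + 1 ≤ (n : ℤ) - k) :
    puncturedLabel n k c (s - 1) = insert (s : ZMod n) (squareCore n k c s) := by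
  rw [squareCore, ← image_insert, puncturedLabel]
  congr 1
  ext x
  simp only [mem_union, mem_insert, mem_Icc]
  omega

theorem puncturedLabel_eq_image_Icc
    (hs : s - c = k ∧ 0 ≤ s + c ∧ s + c < n - k ∨ s + c + 1 = n - k) :
    puncturedLabel n k c s = (Icc (k + c + 1) (n + c - 1)).image Int.cast := by
  have wrap : (Icc (-s) (c - 1)).image (Int.cast : ℤ → ZMod n) =
      (Icc (n - s) (n + c - 1)).image Int.cast := by
    rw [← image_intCast_Icc_add_natCast]
    congr 2 <;> ring
  rw [puncturedLabel, image_union, wrap, ← image_union]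
  congr 1
  ext x
  simp only [mem_union, mem_Icc]
  omega

theorem Jch_eq_insert_insert_squareCore (hkn : k ≤ n) {i j : ℕ} (hi : i ≤ n - k) (hj : j ≤ k)
    {t u v : ℤ} (ht : ((i : ℤ) + j + 1) / 2 = t)
    (huv : ∀ x : ℤ, 1 - t ≤ x ∧ x ≤ i - t ∨ i + j + 1 - t ≤ x ∧ x ≤ n - k + j - t ↔
      x = u ∨ x = v ∨ 1 - s ≤ x ∧ x ≤ c - 1 ∨ s + 1 ≤ x ∧ x ≤ n - k - c - 1) :
    Jch k n i j = insert (u : ZMod n) (insert (v : ZMod n) (squareCore n k c s)) := by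
  rw [Jch_eq_image_intCast hkn hi hj ht, squareCore, ← image_insert, ← image_insert]
  congr 1
  ext x
  simpa only [mem_union, mem_insert, mem_Icc] using huv x

theorem Jch_eq_insert (ha : (a : ℤ) = s + c) (hb : (b : ℤ) = s - c) (ha_pos : 1 ≤ a)
    (han : a < n - k) (hbk : b ≤ k) :
    Jch k n a b = insert (c : ZMod n) (insert ((n - k - c : ℤ) : ZMod n) (squareCore n k c s)) :=
  Jch_eq_insert_insert_squareCore (t := s) (by omega) (by omega) (by omega) (by omega)
    (by omega)

theorem Jch_succ_left_eq_insert (ha : (a : ℤ) = s + c) (hb : (b : ℤ) = s - c)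
    (han : a < n - k) (hbk : b ≤ k) :
    Jch k n (a + 1) b =
      insert (c : ZMod n) (insert ((n - s : ℤ) : ZMod n) (squareCore n k c s)) := by
  rw [intCast_natCast_sub]
  exact Jch_eq_insert_insert_squareCore (t := s + 1) (by omega) (by omega) (by omega) (by omega)
    (by omega)

theorem Jch_succ_right_eq_insert (ha : (a : ℤ) = s + c) (hb : (b : ℤ) = s - c)
    (ha_pos : 1 ≤ a) (han : a < n - k) (hbk : b < k) :
    Jch k n a (b + 1) = insert ((n - k - c : ℤ) : ZMod n)
      (insert ((n - s : ℤ) : ZMod n) (squareCore n k c s)) := by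
  rw [intCast_natCast_sub]
  exact Jch_eq_insert_insert_squareCore (t := s + 1) (by omega) (by omega) (by omega) (by omega)
    (by omega)

theorem Jch_succ_left_pred_right_eq_insert (ha : (a : ℤ) = s + c)
    (hb : (b : ℤ) = s - c) (ha_pos : 1 ≤ a) (han : a < n - k) (hb_pos : 1 ≤ b) (hbk : b ≤ k) :
    Jch k n (a + 1) (b - 1) =
      insert (c : ZMod n) (insert ((c + 1 : ℤ) : ZMod n) (squareCore n k c s)) :=
  Jch_eq_insert_insert_squareCore (t := s) (by omega) (by omega) (by omega) (by omega)
    (by omega)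

theorem Jch_pred_right_eq_insert (ha : (a : ℤ) = s + c) (hb : (b : ℤ) = s - c)
    (ha_pos : 1 ≤ a) (han : a < n - k) (hb_pos : 1 ≤ b) (hbk : b ≤ k) :
    Jch k n a (b - 1) = insert (c : ZMod n) (insert (s : ZMod n) (squareCore n k c s)) :=
  Jch_eq_insert_insert_squareCore (t := s) (by omega) (by omega) (by omega) (by omega)
    (by omega)

theorem Jch_pred_left_eq_insert (ha : (a : ℤ) = s + c) (hb : (b : ℤ) = s - c)
    (ha_pos : 1 ≤ a) (han : a < n - k) (hbk : b ≤ k) :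
    Jch k n (a - 1) b =
      insert (s : ZMod n) (insert ((n - k - c : ℤ) : ZMod n) (squareCore n k c s)) :=
  Jch_eq_insert_insert_squareCore (t := s) (by omega) (by omega) (by omega) (by omega)
    (by omega)

end Staircase

section ShiftRatio

variable {n r : ℕ}

/-- The factor by which a Plücker coordinate changes when its column `x` is replaced by `x + 1`;
`L` is the set of the remaining columns. -/
noncomputable def shiftRatio (A : Matrix (Fin r) (ZMod n) ℂ) (x : ℤ) (L : Finset (ZMod n)) : ℂ :=
  plucker n r A (insert ((x + 1 : ℤ) : ZMod n) L) / plucker n r A (insert (x : ZMod n) L)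

theorem shiftRatio_insert_sub_shiftRatio_insert [NeZero n] (A : Matrix (Fin r) (ZMod n) ℂ)
    {K : Finset (ZMod n)} (hK : #K + 2 = r) {x u v : ℤ} (hxu : x + 1 ≤ u) (huv : u ≤ v)
    (hvx : v ≤ x + n)
    (hu : plucker n r A (insert (x : ZMod n) (insert (u : ZMod n) K)) ≠ 0)
    (hv : plucker n r A (insert (x : ZMod n) (insert (v : ZMod n) K)) ≠ 0) :
    shiftRatio A x (insert (v : ZMod n) K) - shiftRatio A x (insert (u : ZMod n) K) =
      plucker n r A (insert (u : ZMod n) (insert (v : ZMod n) K)) *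
          plucker n r A (insert (x : ZMod n) (insert ((x + 1 : ℤ) : ZMod n) K)) /
        (plucker n r A (insert (x : ZMod n) (insert (u : ZMod n) K)) *
          plucker n r A (insert (x : ZMod n) (insert (v : ZMod n) K))) := by
  have relation := plucker_threeTerm A hK (by omega : x ≤ x + 1) hxu huv hvx
  rw [shiftRatio, shiftRatio, div_sub_div _ _ hv hu, div_eq_div_iff (mul_ne_zero hv hu)
    (mul_ne_zero hu hv)]
  linear_combination (plucker n r A (insert (x : ZMod n) (insert (u : ZMod n) K)) *
    plucker n r A (insert (x : ZMod n) (insert (v : ZMod n) K))) * relation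

theorem shiftRatio_eq_zero [NeZero n] (A : Matrix (Fin r) (ZMod n) ℂ) {x : ℤ}
    {L : Finset (ZMod n)} (hx : ((x + 1 : ℤ) : ZMod n) ∈ L) (hL : #L < r) :
    shiftRatio A x L = 0 := by
  rw [shiftRatio, insert_eq_of_mem hx, plucker_eq_zero_of_card_ne A hL.ne, zero_div]

end ShiftRatio

section Telescope

variable {n k a b : ℕ} {c s : ℤ}

/-- The term of `sumA` at `(a, b)`. -/
noncomputable def summandA (y : ℕ → ℕ → ℂ) (a b : ℕ) : ℂ :=
  (y a (b + 1) * y (a + 1) (b - 1)) / (y a b * y (a + 1) b)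

/-- The term of `sumB` at `(a, b)`. -/
noncomputable def summandB (y : ℕ → ℕ → ℂ) (a b : ℕ) : ℂ :=
  (y (a - 1) b * y (a + 1) (b - 1)) / (y a (b - 1) * y a b)

theorem shiftRatio_sub_eq_summandA (A : Matrix (Fin (n - k)) (ZMod n) ℂ)
    (left_ne : ych k n A a b ≠ 0) (right_ne : ych k n A (a + 1) b ≠ 0) (ha : (a : ℤ) = s + c)
    (hb : (b : ℤ) = s - c) (ha_pos : 1 ≤ a) (han : a < n - k) (hb_pos : 1 ≤ b) (hbk : b < k) :
    shiftRatio A c (puncturedLabel n k c s) -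
        shiftRatio A c (insert ((n - k - c : ℤ) : ZMod n) (squareCore n k c s)) =
      summandA (ych k n A) a b := by
  have : NeZero n := ⟨by omega⟩
  simp only [summandA, ych, Jch_eq_insert ha hb ha_pos han hbk.le,
    Jch_succ_left_eq_insert ha hb han hbk.le, Jch_succ_right_eq_insert ha hb ha_pos han hbk,
    Jch_succ_left_pred_right_eq_insert ha hb ha_pos han hb_pos hbk.le] at left_ne right_ne ⊢
  rw [puncturedLabel_eq_insert (by omega)]
  exact shiftRatio_insert_sub_shiftRatio_insert A
    (card_squareCore_add_two ha hb ha_pos han hbk.le) (by omega) (by omega) (by omega)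
    left_ne right_ne

theorem shiftRatio_sub_eq_summandB (A : Matrix (Fin (n - k)) (ZMod n) ℂ)
    (left_ne : ych k n A a (b - 1) ≠ 0) (right_ne : ych k n A a b ≠ 0) (ha : (a : ℤ) = s + c)
    (hb : (b : ℤ) = s - c) (ha_pos : 1 ≤ a) (han : a < n - k) (hb_pos : 1 ≤ b) (hbk : b ≤ k) :
    shiftRatio A c (insert ((n - k - c : ℤ) : ZMod n) (squareCore n k c s)) -
        shiftRatio A c (puncturedLabel n k c (s - 1)) =
      summandB (ych k n A) a b := by
  have : NeZero n := ⟨by omega⟩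
  simp only [summandB, ych, Jch_eq_insert ha hb ha_pos han hbk,
    Jch_pred_right_eq_insert ha hb ha_pos han hb_pos hbk,
    Jch_pred_left_eq_insert ha hb ha_pos han hbk,
    Jch_succ_left_pred_right_eq_insert ha hb ha_pos han hb_pos hbk] at left_ne right_ne ⊢
  rw [puncturedLabel_sub_one_eq_insert (by omega)]
  exact shiftRatio_insert_sub_shiftRatio_insert A
    (card_squareCore_add_two ha hb ha_pos han hbk) (by omega) (by omega) (by omega)
    left_ne right_ne

theorem shiftRatio_puncturedLabel_sub (A : Matrix (Fin (n - k)) (ZMod n) ℂ)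
    (hy : ∀ i ≤ n - k, ∀ j ≤ k, ych k n A i j ≠ 0) (ha : (a : ℤ) = s + c) (hb : (b : ℤ) = s - c)
    (ha_pos : 1 ≤ a) (han : a < n - k) (hb_pos : 1 ≤ b) (hbk : b ≤ k) :
    shiftRatio A c (puncturedLabel n k c s) - shiftRatio A c (puncturedLabel n k c (s - 1)) =
      (if b < k then summandA (ych k n A) a b else 0) + summandB (ych k n A) a b := by
  rw [← shiftRatio_sub_eq_summandB A (hy a han.le (b - 1) (by omega)) (hy a han.le b hbk) ha hb
    ha_pos han hb_pos hbk]
  split_ifs with hbk'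
  · rw [← shiftRatio_sub_eq_summandA A (hy a han.le b hbk) (hy (a + 1) han b hbk) ha hb ha_pos han
      hb_pos hbk', sub_add_sub_cancel]
  · -- For `b = k` the columns `-s` and `n - k - c` coincide modulo `n`.
    rw [puncturedLabel_eq_insert (by omega), (by omega : (n : ℤ) - s = n - k - c), zero_add]

theorem shiftRatio_puncturedLabel_of_nonneg (A : Matrix (Fin (n - k)) (ZMod n) ℂ) (hc : 0 ≤ c)
    (hcn : 2 * c + 2 ≤ (n : ℤ) - k) : shiftRatio A c (puncturedLabel n k c c) = 0 := by
  have : NeZero n := ⟨by omega⟩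
  have subset : Icc (-c) (c - 1) ∪ Icc (c + 1) ((n : ℤ) - k - c - 1) ⊆
      (Icc (-c) (n - k - c - 1)).erase c := fun x => by
    simp only [mem_union, mem_erase, mem_Icc]
    omega
  have card_lt : #(puncturedLabel n k c c) < n - k := calc
    #(puncturedLabel n k c c) ≤ #((Icc (-c) ((n : ℤ) - k - c - 1)).erase c) :=
      card_image_le.trans (card_le_card subset)
    _ < n - k := by
      rw [card_erase_of_mem (mem_Icc.mpr (by omega)), Int.card_Icc]
      omega
  exact shiftRatio_eq_zero A
    (mem_image_of_mem _ (mem_union_right _ (mem_Icc.mpr (by omega)))) card_lt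

theorem shiftRatio_puncturedLabel_of_neg (A : Matrix (Fin (n - k)) (ZMod n) ℂ)
    (hy : ych k n A 0 b ≠ 0) (hb : (b : ℤ) = -2 * c) (hb_pos : 1 ≤ b)
    (hbk : b < k) (hkn : k < n) :
    shiftRatio A c (puncturedLabel n k c (-c)) = summandA (ych k n A) 0 b := by
  have Jch_zero_succ : Jch k n 0 (b + 1) = Jch k n 0 b := by
    rw [Jch_eq_image_intCast hkn.le (by omega) hbk.le (t := -c) (by omega),
      Jch_eq_image_intCast hkn.le (by omega) hbk (t := 1 - c) (by omega)]
    congr 1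
    ext x
    simp only [mem_union, mem_Icc]
    omega
  have Jch_one : Jch k n (0 + 1) b = insert (c : ZMod n) (puncturedLabel n k c (-c)) := by
    rw [Jch_eq_image_intCast hkn.le (by omega) hbk.le (t := 1 - c) (by omega), puncturedLabel,
      ← image_insert]
    congr 1
    ext x
    simp only [mem_union, mem_insert, mem_Icc]
    omega
  have Jch_one_pred :
      Jch k n (0 + 1) (b - 1) = insert ((c + 1 : ℤ) : ZMod n) (puncturedLabel n k c (-c)) := by
    rw [Jch_eq_image_intCast hkn.le (by omega) (by omega) (t := -c) (by omega), puncturedLabel,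
      ← image_insert]
    congr 1
    ext x
    simp only [mem_union, mem_insert, mem_Icc]
    omega
  rw [summandA, ych, Jch_zero_succ, ← ych, mul_div_mul_left _ _ hy,
    ych, ych, Jch_one, Jch_one_pred, shiftRatio]

theorem plucker_Jplus_div_plucker_Jcyc (A : Matrix (Fin (n - k)) (ZMod n) ℂ) (hkn : k < n)
    (hs : s - c = k ∧ 0 ≤ s + c ∧ s + c < n - k ∨ s + c + 1 = n - k) :
    plucker n (n - k) A (Jplus n k ((k + c : ℤ) : ZMod n)) /
        plucker n (n - k) A (Jcyc n k ((k + c : ℤ) : ZMod n)) =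
      shiftRatio A c (puncturedLabel n k c s) := by
  have last_eq : (k + c + (n - k) : ℤ) = n + c := by ring
  have intCast_add (x : ℤ) : ((n + x : ℤ) : ZMod n) = x := by simp
  rw [Jplus_intCast_eq_insert hkn, Jcyc_intCast_eq_insert hkn, last_eq, add_assoc (n : ℤ),
    intCast_add, intCast_add, shiftRatio, puncturedLabel_eq_image_Icc hs]

variable {a₀ b₀ : ℕ}

theorem sumA_eq_sum_range (y : ℕ → ℕ → ℂ) (h₀ : a₀ = 0 ∨ b₀ = 0) (ha₀ : a₀ < n - k) :
    sumA k n y (a₀ - b₀) = ∑ t ∈ range (min (n - k - 1 - a₀) (k - b₀) + 1),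
      if 1 ≤ b₀ + t ∧ b₀ + t < k then summandA y (a₀ + t) (b₀ + t) else 0 := by
  rw [← sum_filter]
  refine sum_nbij' (fun p => p.1 - a₀) (fun t => (a₀ + t, b₀ + t)) ?_ ?_ ?_ ?_ ?_
  · intro p hp
    simp only [mem_filter, mem_product, mem_range, mem_Icc] at hp ⊢
    omega
  · intro t ht
    simp only [mem_filter, mem_product, mem_range, mem_Icc] at ht ⊢
    omega
  · intro p hp
    simp only [mem_filter, mem_product, mem_range, mem_Icc] at hp
    ext <;> dsimp only <;> omega
  · intro t _
    exact Nat.add_sub_cancel_left a₀ t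
  · intro p hp
    simp only [mem_filter, mem_product, mem_range, mem_Icc] at hp
    have fst_eq : a₀ + (p.1 - a₀) = p.1 := by omega
    have snd_eq : b₀ + (p.1 - a₀) = p.2 := by omega
    rw [fst_eq, snd_eq, summandA]

theorem sumB_eq_sum_range (y : ℕ → ℕ → ℂ) (h₀ : a₀ = 0 ∨ b₀ = 0) :
    sumB k n y (a₀ - b₀) = ∑ t ∈ range (min (n - k - 1 - a₀) (k - b₀)),
      summandB y (a₀ + t + 1) (b₀ + t + 1) := by
  refine sum_nbij' (fun p => p.1 - a₀ - 1) (fun t => (a₀ + t + 1, b₀ + t + 1)) ?_ ?_ ?_ ?_ ?_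
  · intro p hp
    simp only [mem_filter, mem_product, mem_range, mem_Icc] at hp ⊢
    omega
  · intro t ht
    simp only [mem_filter, mem_product, mem_range, mem_Icc] at ht ⊢
    omega
  · intro p hp
    simp only [mem_filter, mem_product, mem_Icc] at hp
    ext <;> dsimp only <;> omega
  · intro t _
    dsimp only
    omega
  · intro p hp
    simp only [mem_filter, mem_product, mem_Icc] at hp
    have fst_eq : a₀ + (p.1 - a₀ - 1) + 1 = p.1 := by omega
    have snd_eq : b₀ + (p.1 - a₀ - 1) + 1 = p.2 := by omega
    rw [fst_eq, snd_eq, summandB]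

theorem shiftRatio_puncturedLabel_start (A : Matrix (Fin (n - k)) (ZMod n) ℂ)
    (hy : ∀ i ≤ n - k, ∀ j ≤ k, ych k n A i j ≠ 0) (h₀ : a₀ = 0 ∨ b₀ = 0)
    (hc : (a₀ : ℤ) - b₀ = 2 * c) (ha₀ : a₀ + 2 ≤ n - k) (hb₀ : b₀ < k) :
    shiftRatio A c (puncturedLabel n k c (b₀ + c)) =
      if 1 ≤ b₀ ∧ b₀ < k then summandA (ych k n A) a₀ b₀ else 0 := by
  split_ifs with hb
  · obtain rfl : a₀ = 0 := by omega
    rw [(by omega : b₀ + c = -c)]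
    exact shiftRatio_puncturedLabel_of_neg A (hy 0 (Nat.zero_le _) b₀ hb₀.le) (by omega) hb.1 hb₀
      (by omega)
  · rw [(by omega : b₀ + c = c)]
    exact shiftRatio_puncturedLabel_of_nonneg A (by omega) (by omega)

theorem sumA_add_sumB_eq_shiftRatio (A : Matrix (Fin (n - k)) (ZMod n) ℂ)
    (hy : ∀ i ≤ n - k, ∀ j ≤ k, ych k n A i j ≠ 0) (h₀ : a₀ = 0 ∨ b₀ = 0)
    (hc : (a₀ : ℤ) - b₀ = 2 * c) (ha₀ : a₀ + 2 ≤ n - k) (hb₀ : b₀ < k) :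
    sumA k n (ych k n A) (2 * c) + sumB k n (ych k n A) (2 * c) =
      shiftRatio A c (puncturedLabel n k c (b₀ + c + (min (n - k - 1 - a₀) (k - b₀) : ℕ))) := by
  let ratio (t : ℕ) : ℂ := shiftRatio A c (puncturedLabel n k c (b₀ + c + t))
  let termA (t : ℕ) : ℂ :=
    if 1 ≤ b₀ + t ∧ b₀ + t < k then summandA (ych k n A) (a₀ + t) (b₀ + t) else 0
  let termB (t : ℕ) : ℂ := summandB (ych k n A) (a₀ + t + 1) (b₀ + t + 1)
  have ratio_zero : ratio 0 = termA 0 := by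
    simpa [ratio, termA] using shiftRatio_puncturedLabel_start A hy h₀ hc ha₀ hb₀
  have ratio_step : ∀ t ∈ range (min (n - k - 1 - a₀) (k - b₀)),
      termA (t + 1) + termB t = ratio (t + 1) - ratio t := by
    intro t ht
    rw [mem_range, lt_min_iff] at ht
    have step := shiftRatio_puncturedLabel_sub A hy (a := a₀ + t + 1) (b := b₀ + t + 1) (c := c)
      (s := b₀ + c + (t + 1))
      (by omega) (by omega) (by omega) (by omega) (by omega) (by omega)
    rw [← add_assoc, add_sub_cancel_right] at step
    simpa [ratio, termA, termB, ← add_assoc] using step.symm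
  rw [← hc, sumA_eq_sum_range _ h₀ (by omega), sumB_eq_sum_range _ h₀, sum_range_succ',
    add_right_comm, ← sum_add_distrib]
  change ∑ t ∈ range _, (termA (t + 1) + termB t) + termA 0 = ratio _
  rw [sum_congr rfl ratio_step, sum_range_sub, ← ratio_zero, sub_add_cancel]

end Telescope

/-- the downward-diagonal superpotential term formula for the
checkboard graph, for `−⌈(k−2)/2⌉ ≤ c ≤ ⌊(n−k−2)/2⌋`. -/
theorem superpotential_term_downward
    (n k : ℕ) (hn : 4 ≤ n) (hk : 2 ≤ k) (hkn : k ≤ n - 2)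
    (A : Matrix (Fin (n - k)) (ZMod n) ℂ)
    (hy : ∀ i ≤ n - k, ∀ j ≤ k, ych k n A i j ≠ 0)
    (c : ℤ) (hc1 : -(((k - 2 + 1) / 2 : ℕ) : ℤ) ≤ c) (hc2 : c ≤ (((n - k - 2) / 2 : ℕ) : ℤ)) :
    plucker n (n - k) A (Jplus n k ((((k : ℤ) + c : ℤ)) : ZMod n)) /
        plucker n (n - k) A (Jcyc n k ((((k : ℤ) + c : ℤ)) : ZMod n)) =
      sumA k n (ych k n A) (2 * c) + sumB k n (ych k n A) (2 * c) := by
  obtain ⟨a₀, b₀, h₀, hc⟩ : ∃ a₀ b₀ : ℕ, (a₀ = 0 ∨ b₀ = 0) ∧ (a₀ : ℤ) - b₀ = 2 * c :=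
    ⟨(2 * c).toNat, (-2 * c).toNat, by omega, by omega⟩
  rw [sumA_add_sumB_eq_shiftRatio A hy h₀ hc (by omega) (by omega)]
  exact plucker_Jplus_div_plucker_Jcyc A (by omega) (by omega)
end

section
/- Let n ≥ 4 and 2 ≤ k ≤ n−2 be integers, let A be an (n−k)×n matrix over ℂ with y_{i,j}(A) ≠ 0 for all 0 ≤ i ≤ n−k and 0 ≤ j ≤ k, and let q ∈ ℂ. Then the superpotential evaluated at A satisfies Σ_{i=1}^{n} ( p_{J_i⁺}(A)/p_{J_i}(A) ) · q^{δ_{i,k}} = y_{1,k−1}/y_{0,k} + y_{n−k−1,1}/y_{n−k,0} + Σ_{d=1−k}^{n−k−2} [ Σ_{(a,b) : a−b = d, 0 ≤ a ≤ n−k−1, 1 ≤ b ≤ k−1} ( y_{a,b+1} y_{a+1,b−1} )/( y_{a,b} y_{a+1,b} ) + Σ_{(a,b) : a−b = d, 1 ≤ a ≤ n−k−1, 1 ≤ b ≤ k} ( y_{a−1,b} y_{a+1,b−1} )/( y_{a,b−1} y_{a,b} ) ] · q^{δ_{0,d}}, where δ denotes the Kronecker delta and all y's are evaluated at A. -/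
open Finset

/-!
Lift the columns of `A` to a family indexed by `ℤ`, twisted by a sign after each period so that
every Plücker coordinate is a minor whose columns are taken in increasing order of any window of `n`
consecutive integers. The checkboard labels then become unions of two intervals: `a` integers ending
at some `c`, a gap of length `b`, and the remaining integers.

Fix `c` and consider the ratio by which such a minor changes when `c` is moved to `c + 1`. By the
three-term Plücker relations, the terms of the two sums along a diagonal `a - b = d` with `d` even
are the successive differences of this ratio as `a` and `b` grow alternately. At the start of the
diagonal the ratio vanishes, because the moved label has the wrong cardinality; at its end the two
intervals are adjacent modulo `n`, and the ratio is `p_{J_i⁺} / p_{J_i}`. The diagonals with `d` odd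
reduce to this case under the symmetry `(a, b) ↦ (n - k - a, k - b)`. The two isolated fractions
play the role of the diagonals `d = -k` and `d = n - k - 1`, and `d ↦ i` is then a bijection onto
`ℤ/nℤ` sending `0` to `k`.
-/

section Sums

theorem sum_comp_eq_sum_univ {α β M : Type*} [Fintype β] [AddCommMonoid M] {s : Finset α}
    {φ : α → β} (hφ : Set.InjOn φ s) (hs : #s = Fintype.card β) (F : β → M) :
    ∑ a ∈ s, F (φ a) = ∑ b, F b := by
  classical
  rw [← sum_image hφ, eq_univ_of_card (s.image φ) (by rw [card_image_of_injOn hφ, hs])]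

theorem sum_Icc_eq_add_add_sum_Icc {M : Type*} [AddCommMonoid M] (F : ℤ → M) {m l : ℤ}
    (hml : m < l) :
    ∑ d ∈ Icc m l, F d = F m + F l + ∑ d ∈ Icc (m + 1) (l - 1), F d := by
  have hright : Icc (m + 1) l = insert l (Icc (m + 1) (l - 1)) := by
    ext; simp only [mem_insert, mem_Icc]; omega
  rw [← insert_Icc_add_one_left_eq_Icc hml.le, sum_insert (by simp), hright,
    sum_insert (by simp), add_assoc]

variable {M : Type*} [AddCommGroup M]

theorem sum_Ico_int_sub (g : ℤ → M) {m l : ℤ} (hml : m ≤ l) :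
    ∑ s ∈ Ico m l, (g (s + 1) - g s) = g l - g m := by
  induction l, hml using Int.leInduction with
  | base => simp
  | succ l hml ih =>
    rw [← insert_Ico_right_eq_Ico_add_one hml, sum_insert right_notMem_Ico, ih]
    abel

variable {r k : ℕ}

theorem sum_diagonal_eq_sum_filter_even {N : Type*} [AddCommMonoid N] (u : ℤ → N) (d : ℤ) :
    ∑ p ∈ (range r ×ˢ Icc 1 (k - 1)).filter (fun p ↦ (p.1 : ℤ) - p.2 = d), u (p.1 + p.2) =
      ∑ s ∈ (Ico (max (d + 1) (-d)) (min (2 * k + d) (2 * r - d - 1))).filter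
        (fun s ↦ Even (s - d)), u s := by
  refine sum_nbij' (fun p ↦ p.1 + p.2) (fun s ↦ (((s + d) / 2).toNat, ((s - d) / 2).toNat))
    ?_ ?_ ?_ ?_ fun _ _ ↦ rfl <;>
  simp only [mem_filter, mem_product, mem_range, mem_Icc, mem_Ico, Prod.forall, Prod.mk.injEq,
    Int.even_iff] <;> omega

theorem sum_diagonal_eq_sum_filter_not_even {N : Type*} [AddCommMonoid N] (u : ℤ → N) (d : ℤ) :
    ∑ p ∈ (Icc 1 (r - 1) ×ˢ Icc 1 k).filter (fun p ↦ (p.1 : ℤ) - p.2 = d), u (p.1 + p.2 - 1) =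
      ∑ s ∈ (Ico (max (d + 1) (-d)) (min (2 * k + d) (2 * r - d - 1))).filter
        (fun s ↦ ¬ Even (s - d)), u s := by
  refine sum_nbij' (fun p ↦ p.1 + p.2 - 1)
    (fun s ↦ (((s + d + 1) / 2).toNat, ((s - d + 1) / 2).toNat)) ?_ ?_ ?_ ?_ fun _ _ ↦ rfl <;>
  simp only [mem_filter, mem_product, mem_Icc, mem_Ico, Prod.forall, Prod.mk.injEq,
    Int.even_iff] <;> omega

theorem sum_diagonal_add_sum_diagonal_eq_sub (g : ℤ → M) {d : ℤ} (hr : 0 < r) (hk : 0 < k)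
    (hd : -(k : ℤ) ≤ d) (hd' : d < r) :
    ∑ p ∈ (range r ×ˢ Icc 1 (k - 1)).filter (fun p ↦ (p.1 : ℤ) - p.2 = d),
        (g (p.1 + p.2 + 1) - g (p.1 + p.2)) +
      ∑ p ∈ (Icc 1 (r - 1) ×ˢ Icc 1 k).filter (fun p ↦ (p.1 : ℤ) - p.2 = d),
        (g (p.1 + p.2 - 1 + 1) - g (p.1 + p.2 - 1)) =
      g (min (2 * k + d) (2 * r - d - 1)) - g (max (d + 1) (-d)) := by
  rw [sum_diagonal_eq_sum_filter_even (fun s ↦ g (s + 1) - g s),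
    sum_diagonal_eq_sum_filter_not_even (fun s ↦ g (s + 1) - g s),
    sum_filter_add_sum_filter_not, sum_Ico_int_sub g (by omega)]

end Sums

section SortedEval

variable {ι R V W : Type*} [LinearOrder ι] [CommRing R] [AddCommGroup V] [AddCommGroup W]
  [Module R V] [Module R W] {r : ℕ}

/-- The value of an alternating map on the family of vectors `f` restricted to `S` and listed in
increasing order of the index, with value `0` if `S` does not have exactly `r` elements. -/
def sortedEval (φ : V [⋀^Fin r]→ₗ[R] W) (f : ι → V) (S : Finset ι) : W :=
  if h : #S = r then φ (f ∘ S.orderEmbOfFin h) else 0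

theorem sortedEval_of_card_eq (φ : V [⋀^Fin r]→ₗ[R] W) (f : ι → V) {S : Finset ι} (h : #S = r) :
    sortedEval φ f S = φ (f ∘ S.orderEmbOfFin h) :=
  dif_pos h

theorem sortedEval_of_card_ne (φ : V [⋀^Fin r]→ₗ[R] W) (f : ι → V) {S : Finset ι} (h : #S ≠ r) :
    sortedEval φ f S = 0 :=
  dif_neg h

theorem orderEmbOfFin_lt_iff {S : Finset ι} (h : #S = r) (a : ι) (i : Fin r) :
    S.orderEmbOfFin h i < a ↔ (i : ℕ) < #{s ∈ S | s < a} := by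
  have hlower : #{s ∈ S | s < a} = #{j : Fin r | S.orderEmbOfFin h j < a} := by
    conv_lhs => rw [← S.map_orderEmbOfFin_univ h]
    rw [filter_map, card_map]
    rfl
  rw [hlower]
  constructor
  · intro hi
    have hsub : Iic i ⊆ ({j : Fin r | S.orderEmbOfFin h j < a} : Finset (Fin r)) := fun j hj ↦ by
      simpa using ((S.orderEmbOfFin h).monotone (mem_Iic.mp hj)).trans_lt hi
    simpa [Fin.card_Iic] using card_le_card hsub
  · intro hi
    by_contra! hia
    have hsub : ({j : Fin r | S.orderEmbOfFin h j < a} : Finset (Fin r)) ⊆ Iio i := fun j hj ↦ by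
      simpa using (mem_filter.mp hj).2.trans_le hia
    exact hi.not_ge (by simpa [Fin.card_Iio] using card_le_card hsub)

theorem orderEmbOfFin_insert_s17 {S : Finset ι} {a : ι} (ha : a ∉ S) (h : #S = r)
    (h' : #(insert a S) = r + 1) :
    ((insert a S).orderEmbOfFin h' : Fin (r + 1) → ι) =
      Fin.insertNth (α := fun _ ↦ ι)
        ⟨#{s ∈ S | s < a}, Nat.lt_succ_of_le (h ▸ card_filter_le S _)⟩ a (S.orderEmbOfFin h) := by
  refine (orderEmbOfFin_unique h' (fun i ↦ ?_) ?_).symm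
  · generalize_proofs hp
    induction i using Fin.succAboveCases ⟨#{s ∈ S | s < a}, hp⟩ <;> simp
  · refine (Fin.strictMono_insertNth_iff _ _ _).2
      ⟨(S.orderEmbOfFin h).strictMono, fun i hi ↦ (orderEmbOfFin_lt_iff h a i).2 hi, fun i hi ↦ ?_⟩
    refine lt_of_le_of_ne (not_lt.1 fun hlt ↦ ?_) fun hai ↦ ha (hai ▸ S.orderEmbOfFin_mem h i)
    exact ((orderEmbOfFin_lt_iff h a i).1 hlt).not_ge hi

theorem sortedEval_insert (φ : V [⋀^Fin (r + 1)]→ₗ[R] W) (f : ι → V) {S : Finset ι} {a : ι}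
    (ha : a ∉ S) :
    sortedEval φ f (insert a S) = (-1) ^ #{s ∈ S | s < a} • sortedEval (φ.curryLeft (f a)) f S := by
  by_cases h : #S = r
  · have h' : #(insert a S) = r + 1 := by rw [card_insert_of_notMem ha, h]
    have hcomp (p : Fin (r + 1)) : f ∘ p.insertNth (α := fun _ ↦ ι) a (S.orderEmbOfFin h) =
        p.insertNth (α := fun _ ↦ V) (f a) (f ∘ S.orderEmbOfFin h) := by
      ext i; induction i using Fin.succAboveCases p <;> simp
    rw [sortedEval_of_card_eq _ _ h', sortedEval_of_card_eq _ _ h, orderEmbOfFin_insert_s17 ha h h',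
      hcomp, AlternatingMap.map_insertNth, AlternatingMap.curryLeft_apply_apply]
  · rw [sortedEval_of_card_ne _ _ h, sortedEval_of_card_ne, smul_zero]
    rwa [card_insert_of_notMem ha, Ne, Nat.add_right_cancel_iff]

end SortedEval

section Minor

variable {ι R : Type*} [LinearOrder ι] [CommRing R] {r : ℕ}

theorem det_mul_map_eq_sum_det_updateRow_mul {m : Type*} [Fintype m] [DecidableEq m]
    (M : m → m → R) (v : m → R) (L : (m → R) →ₗ[R] R) :
    (Matrix.of M).det * L v = ∑ i, ((Matrix.of M).updateRow i v).det * L (M i) := by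
  have hcramer : (Matrix.of M).det • v = ∑ i, ((Matrix.of M).updateRow i v).det • M i := by
    rw [← Matrix.det_transpose, ← Matrix.mulVec_cramer, Matrix.mulVec_eq_sum]
    simp only [Matrix.cramer_transpose_apply, Matrix.transpose_transpose, op_smul_eq_smul]
    rfl
  simpa using congrArg L hcramer

theorem det_vecCons_vecCons_swap {m : ℕ} (s : Fin m → Fin (m + 2) → R) (u v : Fin (m + 2) → R) :
    (Matrix.of (Matrix.vecCons u (Matrix.vecCons v s))).det =
      -(Matrix.of (Matrix.vecCons v (Matrix.vecCons u s))).det := by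
  have hswap : Matrix.of (Matrix.vecCons u (Matrix.vecCons v s)) =
      (Matrix.of (Matrix.vecCons v (Matrix.vecCons u s))).submatrix (Equiv.swap 0 1) id := by
    ext i j
    refine Fin.cases rfl (fun i ↦ Fin.cases rfl (fun i ↦ ?_) i) i
    have hfix : Equiv.swap 0 1 i.succ.succ = i.succ.succ :=
      Equiv.swap_apply_of_ne_of_ne (Fin.succ_ne_zero _)
        fun h ↦ Fin.succ_ne_zero i (Fin.succ_injective _ h)
    simp [hfix]
  rw [hswap, Matrix.det_permute, Equiv.Perm.sign_swap Fin.zero_ne_one]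
  simp

theorem det_vecCons_vecCons_three_term {m : ℕ} (s : Fin m → Fin (m + 2) → R)
    (u v w x : Fin (m + 2) → R) :
    let E (y z : Fin (m + 2) → R) : R :=
      (Matrix.of (Matrix.vecCons y (Matrix.vecCons z s))).det
    E u v * E w x - E u w * E v x + E u x * E v w = 0 := by
  intro E
  let L : (Fin (m + 2) → R) →ₗ[R] R :=
    Matrix.detRowAlternating.toMultilinearMap.toLinearMap (Matrix.vecCons 0 (Matrix.vecCons x s)) 0
  have hL (z : Fin (m + 2) → R) : L z = E z x :=
    congrArg Matrix.detRowAlternating (Fin.update_cons_zero _ _ _)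
  have hLs (j : Fin m) : L (s j) = 0 :=
    (hL _).trans <|
      Matrix.det_zero_of_row_eq (i := 0) (j := j.succ.succ) (Fin.succ_ne_zero _).symm rfl
  have hupdate0 : (Matrix.of (Matrix.vecCons u (Matrix.vecCons v s))).updateRow 0 w =
      Matrix.of (Matrix.vecCons w (Matrix.vecCons v s)) :=
    congrArg Matrix.of (Fin.update_cons_zero (α := fun _ ↦ Fin (m + 2) → R) u _ w)
  have hupdate1 : (Matrix.of (Matrix.vecCons u (Matrix.vecCons v s))).updateRow 1 w =
      Matrix.of (Matrix.vecCons u (Matrix.vecCons w s)) :=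
    congrArg Matrix.of <| (Fin.cons_update (α := fun _ ↦ Fin (m + 2) → R) u _ 0 w).symm.trans
      (congrArg (Matrix.vecCons u) (Fin.update_cons_zero _ _ _))
  have hcramer : E u v * L w = E w v * L u + (E u w * L v + 0) := by
    simpa only [Fin.sum_univ_succ, Fin.succ_zero_eq_one, hupdate0, hupdate1, Matrix.cons_val_zero,
      Matrix.cons_val_one, Matrix.cons_val_succ, hLs, mul_zero, sum_const_zero]
      using det_mul_map_eq_sum_det_updateRow_mul (Matrix.vecCons u (Matrix.vecCons v s)) w L
  rw [hL, hL, hL] at hcramer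
  linear_combination hcramer + E u x * det_vecCons_vecCons_swap s w v

/-- The `r × r` minor on the vectors `f t`, `t ∈ S`, listed in increasing order of `t`. -/
def minor (f : ι → Fin r → R) (S : Finset ι) : R :=
  sortedEval Matrix.detRowAlternating f S

theorem minor_of_card_eq (f : ι → Fin r → R) {S : Finset ι} (h : #S = r) :
    minor f S = (Matrix.of (f ∘ S.orderEmbOfFin h)).det :=
  sortedEval_of_card_eq _ _ h

theorem minor_of_card_ne (f : ι → Fin r → R) {S : Finset ι} (h : #S ≠ r) : minor f S = 0 :=
  sortedEval_of_card_ne _ _ h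

theorem minor_insert_insert {m : ℕ} (f : ι → Fin (m + 2) → R) {S : Finset ι} (hS : #S = m) {a b : ι}
    (hab : a < b) (ha : a ∉ S) (hb : b ∉ S) :
    minor f (insert a (insert b S)) = (-1) ^ (#{s ∈ S | s < a} + #{s ∈ S | s < b}) *
      (Matrix.of (Matrix.vecCons (f a) (Matrix.vecCons (f b) (f ∘ S.orderEmbOfFin hS)))).det := by
  have hcount : #{s ∈ insert b S | s < a} = #{s ∈ S | s < a} := by
    rw [filter_insert, if_neg hab.not_gt]
  rw [minor, sortedEval_insert _ _ (by simp [hab.ne, ha]), sortedEval_insert _ _ hb,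
    sortedEval_of_card_eq _ _ hS, hcount, smul_smul, ← pow_add]
  simp only [AlternatingMap.curryLeft_apply_apply, zsmul_eq_mul, Int.cast_pow, Int.cast_neg,
    Int.cast_one]
  rfl

theorem minor_three_term (f : ι → Fin r → R) {S : Finset ι} {a b c d : ι} (hab : a < b)
    (hbc : b ≤ c) (hcd : c < d) (ha : a ∉ S) (hb : b ∉ S) (hc : c ∉ S) (hd : d ∉ S) :
    minor f (insert a (insert b S)) * minor f (insert c (insert d S)) -
      minor f (insert a (insert c S)) * minor f (insert b (insert d S)) +
      minor f (insert a (insert d S)) * minor f (insert b (insert c S)) = 0 := by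
  have hcard {x y : ι} (hxy : x < y) (hx : x ∉ S) (hy : y ∉ S) :
      #(insert x (insert y S)) = #S + 2 := by
    rw [card_insert_of_notMem (by simp [hxy.ne, hx]), card_insert_of_notMem hy]
  have hac := hab.trans_le hbc
  have hbd := hbc.trans_lt hcd
  by_cases hr : #S + 2 = r
  · subst hr
    obtain rfl | hbc := hbc.eq_or_lt
    · rw [insert_idem, minor_of_card_ne f (S := insert b S) (by simp [hb])]
      ring
    · simp only [minor_insert_insert f rfl, *, hac.trans hcd, not_false_eq_true]
      linear_combination (-1) ^ (#{s ∈ S | s < a} + #{s ∈ S | s < b} + #{s ∈ S | s < c} +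
        #{s ∈ S | s < d}) * det_vecCons_vecCons_three_term (f ∘ S.orderEmbOfFin rfl) (f a) (f b)
          (f c) (f d)
  · have hzero {x y : ι} (hxy : x < y) (hx : x ∉ S) (hy : y ∉ S) :
        minor f (insert x (insert y S)) = 0 := minor_of_card_ne f (by rwa [hcard hxy hx hy])
    simp [hzero hab ha hb, hzero hac ha hc, hzero (hac.trans hcd) ha hd]

end Minor

section TwistedColumn

variable {ι κ R : Type*} [LinearOrder ι] [LinearOrder κ] [CommRing R] {n r : ℕ}

theorem minor_congr {f g : ι → Fin r → R} {S : Finset ι} (h : ∀ t ∈ S, f t = g t) :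
    minor f S = minor g S := by
  by_cases hS : #S = r
  · rw [minor_of_card_eq f hS, minor_of_card_eq g hS]
    congr 2
    ext1 i
    exact h _ (S.orderEmbOfFin_mem hS i)
  · rw [minor_of_card_ne f hS, minor_of_card_ne g hS]

theorem minor_map (f : κ → Fin r → R) (e : ι ↪o κ) (S : Finset ι) :
    minor f (S.map e.toEmbedding) = minor (f ∘ e) S := by
  have hcard : #(S.map e.toEmbedding) = #S := card_map _
  by_cases hS : #S = r
  · have hsort : e ∘ S.orderEmbOfFin hS = (S.map e.toEmbedding).orderEmbOfFin (hcard.trans hS) :=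
      orderEmbOfFin_unique _ (fun i ↦ by simp) (e.strictMono.comp (S.orderEmbOfFin hS).strictMono)
    rw [minor_of_card_eq f (hcard.trans hS), minor_of_card_eq _ hS, Function.comp_assoc, hsort]
  · rw [minor_of_card_ne _ hS, minor_of_card_ne f (hcard.trans_ne hS)]

theorem minor_insert_eq_minor_insert {f : ι → Fin r → R} {T : Finset ι} {x y : ι}
    (hT : ∀ t ∈ T, x < t ∧ t < y) (hf : f y = ((-1) ^ (r - 1) : ℤˣ) • f x) :
    minor f (insert y T) = minor f (insert x T) := by
  have hx : x ∉ T := fun h ↦ (hT x h).1.false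
  have hy : y ∉ T := fun h ↦ (hT y h).2.false
  obtain _ | r := r
  · rw [minor_of_card_ne f (by simp), minor_of_card_ne f (by simp)]
  · have hcountx : {t ∈ T | t < x} = ∅ := filter_false_of_mem fun t ht ↦ (hT t ht).1.not_gt
    have hcounty : {t ∈ T | t < y} = T := filter_true_of_mem fun t ht ↦ (hT t ht).2
    rw [minor, minor, sortedEval_insert _ _ hx, sortedEval_insert _ _ hy, hcountx, hcounty]
    by_cases hr : #T = r
    · rw [sortedEval_of_card_eq _ _ hr, sortedEval_of_card_eq _ _ hr, hf, hr, Units.smul_def,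
        map_zsmul, AlternatingMap.smul_apply, smul_smul]
      simp [← pow_add, ← two_mul, pow_mul]
    · rw [sortedEval_of_card_ne _ _ hr, sortedEval_of_card_ne _ _ hr, smul_zero, smul_zero]

/-- The columns of `A`, continued from the representatives `1, …, n` to all integers so that
`t ↦ t + n` multiplies them by `(-1) ^ (r - 1)`. With this sign, moving a column from one end of a
window of length `n` to the other does not change the minor of a sorted list of columns. -/
def twistedColumn (A : Matrix (Fin r) (ZMod n) R) (t : ℤ) : Fin r → R :=
  (((-1) ^ (r - 1)) ^ ((t - 1) / n) : ℤˣ) • A.col t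

theorem twistedColumn_add_period [NeZero n] (A : Matrix (Fin r) (ZMod n) R) (t : ℤ) :
    twistedColumn A (t + n) = ((-1) ^ (r - 1) : ℤˣ) • twistedColumn A t := by
  have hdiv : (t + n - 1) / n = 1 + (t - 1) / n := by
    rw [show t + n - 1 = t - 1 + 1 * n by ring, Int.add_mul_ediv_right _ _ (NeZero.ne _), add_comm]
  simp [twistedColumn, hdiv, zpow_add, mul_smul]

theorem twistedColumn_of_mem_Ioc (A : Matrix (Fin r) (ZMod n) R) {t : ℤ} (ht : t ∈ Ioc 0 (n : ℤ)) :
    twistedColumn A t = A.col t := by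
  rw [mem_Ioc] at ht
  simp [twistedColumn, Int.ediv_eq_zero_of_lt (a := t - 1) (b := n) (by omega) (by omega)]

end TwistedColumn

section Plucker

variable {n r : ℕ} (A : Matrix (Fin r) (ZMod n) ℂ)

theorem plucker_eq_minor (J : Finset (ZMod n)) :
    plucker n r A J =
      minor (fun t : ℕ ↦ A.col ((t : ZMod n) + 1)) (J.image fun x ↦ (x - 1).val) := by
  by_cases h : #(J.image fun x ↦ (x - 1).val) = r
  · rw [plucker, dif_pos h, minor_of_card_eq _ h, ← Matrix.det_transpose]
    rfl
  · rw [plucker, dif_neg h, minor_of_card_ne _ h]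

variable [NeZero n]

theorem val_intCast_sub_one_add_one {t : ℤ} (ht : t ∈ Ioc 0 (n : ℤ)) :
    (((t : ZMod n) - 1).val : ℤ) + 1 = t := by
  rw [mem_Ioc] at ht
  rw [← Int.cast_one, ← Int.cast_sub, ZMod.val_intCast, Int.emod_eq_of_lt (by omega) (by omega)]
  ring

theorem minor_twistedColumn_eq_plucker_of_subset_Ioc_zero {S : Finset ℤ} (hS : S ⊆ Ioc 0 (n : ℤ)) :
    minor (twistedColumn A) S = plucker n r A (S.image Int.cast) := by
  let e : ℕ ↪o ℤ := OrderEmbedding.ofStrictMono (fun t ↦ (t : ℤ) + 1) fun s t h ↦ by simpa using h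
  let K : Finset ℕ := (S.image (Int.cast : ℤ → ZMod n)).image fun x ↦ (x - 1).val
  have hK : K.map e.toEmbedding = S := by
    rw [map_eq_image, image_image, image_image]
    exact (image_congr fun t ht ↦ val_intCast_sub_one_add_one (hS ht)).trans image_id'
  have hcol : (fun t : ℤ ↦ A.col t) ∘ e = fun t : ℕ ↦ A.col ((t : ZMod n) + 1) := by
    ext1 t
    have he : e t = (t : ℤ) + 1 := rfl
    simp [he]
  rw [minor_congr fun t ht ↦ twistedColumn_of_mem_Ioc A (hS ht), plucker_eq_minor, ← hcol,
    ← minor_map, hK]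

theorem forall_subset_Ico_iff_forall_subset_Ioc {α : Type*} [LinearOrder α] [LocallyFiniteOrder α]
    {Q : Finset α → Prop} {x y : α} (hxy : x < y)
    (hQ : ∀ T ⊆ Ioo x y, Q (insert x T) ↔ Q (insert y T)) :
    (∀ S ⊆ Ico x y, Q S) ↔ ∀ S ⊆ Ioc x y, Q S := by
  rw [← Ioo_insert_left hxy, ← Ioo_insert_right hxy]
  constructor <;> intro h S hS <;> rw [subset_insert_iff] at hS
  · by_cases hy : y ∈ S
    · rw [← insert_erase hy, ← hQ _ hS]
      exact h _ (insert_subset_insert _ hS)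
    · exact h S ((erase_eq_of_notMem hy ▸ hS).trans (subset_insert _ _))
  · by_cases hx : x ∈ S
    · rw [← insert_erase hx, hQ _ hS]
      exact h _ (insert_subset_insert _ hS)
    · exact h S ((erase_eq_of_notMem hx ▸ hS).trans (subset_insert _ _))

theorem minor_twistedColumn_eq_plucker (m : ℤ) {S : Finset ℤ} (hS : S ⊆ Ioc m (m + n)) :
    minor (twistedColumn A) S = plucker n r A (S.image Int.cast) := by
  let Q (S : Finset ℤ) : Prop := minor (twistedColumn A) S = plucker n r A (S.image Int.cast)
  have hshift (x : ℤ) : (∀ S ⊆ Ioc (x - 1) (x - 1 + n), Q S) ↔ ∀ S ⊆ Ioc x (x + n), Q S := by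
    have hwindow : Ioc (x - 1) (x - 1 + n) = Ico x (x + n) := by
      ext; simp only [mem_Ioc, mem_Ico]; omega
    rw [hwindow]
    refine forall_subset_Ico_iff_forall_subset_Ioc (by simpa using NeZero.pos n) fun T hT ↦ ?_
    simp only [Q, image_insert, Int.cast_add, Int.cast_natCast, CharP.cast_eq_zero, add_zero,
      minor_insert_eq_minor_insert (fun _ ht ↦ mem_Ioo.1 (hT ht)) (twistedColumn_add_period A x)]
  suffices h : ∀ m : ℤ, ∀ S ⊆ Ioc m (m + n), Q S from h m S hS
  intro m
  induction m using Int.induction_on with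
  | zero => exact fun S hS ↦ minor_twistedColumn_eq_plucker_of_subset_Ioc_zero A (by simpa using hS)
  | succ i ih => exact (hshift (i + 1)).1 (by simpa using ih)
  | pred i ih => exact (hshift (-i)).2 ih

end Plucker

section ArcPair

variable {r : ℕ}

/-- The union of two intervals with `r` elements in total: `a` integers ending at `c`, then a gap of
length `b`, then `r - a` integers. The checkboard labels are of this form modulo `n`. -/
noncomputable def arcPair (r : ℕ) (c a b : ℤ) : Finset ℤ :=
  Ioc (c - a) c ∪ Ioc (c + b) (c + b + r - a)

/-- The set obtained from `S` by moving its element `c` to `c + 1`, as in the passage from `J_i` to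
`J_i⁺`. -/
def bump (S : Finset ℤ) (c : ℤ) : Finset ℤ :=
  insert (c + 1) (S.erase c)

theorem mem_arcPair {c a b t : ℤ} :
    t ∈ arcPair r c a b ↔ (c - a < t ∧ t ≤ c) ∨ (c + b < t ∧ t ≤ c + b + r - a) := by
  simp only [arcPair, mem_union, mem_Ioc]

theorem mem_bump {S : Finset ℤ} {c t : ℤ} : t ∈ bump S c ↔ t = c + 1 ∨ t ≠ c ∧ t ∈ S := by
  simp only [bump, mem_insert, mem_erase]

theorem card_arcPair {c a b : ℤ} (ha : 0 ≤ a) (har : a ≤ r) (hb : 0 ≤ b) :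
    #(arcPair r c a b) = r := by
  have hdisj : Disjoint (Ioc (c - a) c) (Ioc (c + b) (c + b + r - a)) :=
    disjoint_left.2 fun t ↦ by simp only [mem_Ioc]; omega
  rw [arcPair, card_union_of_disjoint hdisj, Int.card_Ioc, Int.card_Ioc]
  omega

section CommRing

variable {R : Type*} [CommRing R] (f : ℤ → Fin r → R) (c : ℤ) {a b : ℤ}

theorem minor_bump_arcPair_of_left_eq_zero (hb : 0 < b) :
    minor f (bump (arcPair r c 0 b) c) = 0 := by
  have hc : c ∉ arcPair r c 0 b := by rw [mem_arcPair]; omega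
  have hc1 : c + 1 ∉ arcPair r c 0 b := by rw [mem_arcPair]; omega
  refine minor_of_card_ne f ?_
  rw [bump, erase_eq_of_notMem hc, card_insert_of_notMem hc1, card_arcPair le_rfl (by omega) hb.le]
  omega

theorem minor_bump_arcPair_of_gap_eq_zero (ha : 0 < a) (har : a < r) :
    minor f (bump (arcPair r c a 0) c) = 0 := by
  have hc : c ∈ arcPair r c a 0 := by rw [mem_arcPair]; omega
  have hc1 : c + 1 ∈ (arcPair r c a 0).erase c := by rw [mem_erase, mem_arcPair]; omega
  refine minor_of_card_ne f ?_
  rw [bump, insert_eq_self.2 hc1, card_erase_of_mem hc, card_arcPair ha.le har.le le_rfl]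
  omega

theorem minor_bump_arcPair_left_succ (ha : 0 ≤ a) (har : a < r) (hb : 0 < b) :
    minor f (bump (arcPair r c (a + 1) b) c) * minor f (arcPair r c a b) -
      minor f (bump (arcPair r c a b) c) * minor f (arcPair r c (a + 1) b) =
      minor f (arcPair r (c - 1) a (b + 1)) * minor f (arcPair r (c + 1) (a + 1) (b - 1)) := by
  obtain rfl | ha := ha.eq_or_lt
  · have hbump : bump (arcPair r c (0 + 1) b) c = arcPair r (c + 1) (0 + 1) (b - 1) := by
      ext; simp only [mem_bump, mem_arcPair]; omega
    have hempty : arcPair r c 0 b = arcPair r (c - 1) 0 (b + 1) := by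
      ext; simp only [mem_arcPair]; omega
    rw [minor_bump_arcPair_of_left_eq_zero f c hb, hbump, hempty]
    ring
  · let S : Finset ℤ := Ioc (c - a) (c - 1) ∪ Ioc (c + b) (c + b + r - a - 1)
    have hS {t : ℤ} :
        t ∈ S ↔ (c - a < t ∧ t ≤ c - 1) ∨ (c + b < t ∧ t ≤ c + b + r - a - 1) := by
      simp only [S, mem_union, mem_Ioc]
    have hplucker := minor_three_term f (S := S) (a := c - a) (b := c) (c := c + 1)
      (d := c + b + r - a) (by omega) (by omega) (by omega) (by rw [hS]; omega) (by rw [hS]; omega)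
      (by rw [hS]; omega) (by rw [hS]; omega)
    have hαβ : insert (c - a) (insert c S) = arcPair r c (a + 1) b := by
      ext; simp only [mem_insert, hS, mem_arcPair]; omega
    have hαγ : insert (c - a) (insert (c + 1) S) = bump (arcPair r c (a + 1) b) c := by
      ext; simp only [mem_insert, hS, mem_bump, mem_arcPair]; omega
    have hαδ : insert (c - a) (insert (c + b + r - a) S) = arcPair r (c - 1) a (b + 1) := by
      ext; simp only [mem_insert, hS, mem_arcPair]; omega
    have hβγ : insert c (insert (c + 1) S) = arcPair r (c + 1) (a + 1) (b - 1) := by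
      ext; simp only [mem_insert, hS, mem_arcPair]; omega
    have hβδ : insert c (insert (c + b + r - a) S) = arcPair r c a b := by
      ext; simp only [mem_insert, hS, mem_arcPair]; omega
    have hγδ : insert (c + 1) (insert (c + b + r - a) S) = bump (arcPair r c a b) c := by
      ext; simp only [mem_insert, hS, mem_bump, mem_arcPair]; omega
    rw [hαβ, hαγ, hαδ, hβγ, hβδ, hγδ] at hplucker
    linear_combination -hplucker

theorem minor_bump_arcPair_gap_pred (ha : 0 < a) (har : a < r) (hb : 0 < b) :
    minor f (bump (arcPair r c a b) c) * minor f (arcPair r c a (b - 1)) -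
      minor f (bump (arcPair r c a (b - 1)) c) * minor f (arcPair r c a b) =
      minor f (arcPair r (c - 1) (a - 1) b) * minor f (arcPair r (c + 1) (a + 1) (b - 1)) := by
  let S : Finset ℤ := Ioc (c - a) (c - 1) ∪ Ioc (c + b) (c + b + r - a - 1)
  have hS {t : ℤ} : t ∈ S ↔ (c - a < t ∧ t ≤ c - 1) ∨ (c + b < t ∧ t ≤ c + b + r - a - 1) := by
    simp only [S, mem_union, mem_Ioc]
  have hplucker := minor_three_term f (S := S) (a := c) (b := c + 1) (c := c + b)
    (d := c + b + r - a) (by omega) (by omega) (by omega) (by rw [hS]; omega) (by rw [hS]; omega)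
    (by rw [hS]; omega) (by rw [hS]; omega)
  have hαβ : insert c (insert (c + 1) S) = arcPair r (c + 1) (a + 1) (b - 1) := by
    ext; simp only [mem_insert, hS, mem_arcPair]; omega
  have hαγ : insert c (insert (c + b) S) = arcPair r c a (b - 1) := by
    ext; simp only [mem_insert, hS, mem_arcPair]; omega
  have hαδ : insert c (insert (c + b + r - a) S) = arcPair r c a b := by
    ext; simp only [mem_insert, hS, mem_arcPair]; omega
  have hβγ : insert (c + 1) (insert (c + b) S) = bump (arcPair r c a (b - 1)) c := by
    ext; simp only [mem_insert, hS, mem_bump, mem_arcPair]; omega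
  have hβδ : insert (c + 1) (insert (c + b + r - a) S) = bump (arcPair r c a b) c := by
    ext; simp only [mem_insert, hS, mem_bump, mem_arcPair]; omega
  have hγδ : insert (c + b) (insert (c + b + r - a) S) = arcPair r (c - 1) (a - 1) b := by
    ext; simp only [mem_insert, hS, mem_arcPair]; omega
  rw [hαβ, hαγ, hαδ, hβγ, hβδ, hγδ] at hplucker
  linear_combination -hplucker

end CommRing

section Field

variable {F : Type*} [Field F]

/-- The ratio of the minors on the columns of `bump (arcPair r c a b) c` and of `arcPair r c a b`.
When the two arcs are adjacent modulo `n` it is a summand `p_{J_i⁺} / p_{J_i}` of the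
superpotential. -/
noncomputable def bumpRatio (f : ℤ → Fin r → F) (c a b : ℤ) : F :=
  minor f (bump (arcPair r c a b) c) / minor f (arcPair r c a b)

theorem bumpRatio_left_eq (f : ℤ → Fin r → F) (c b b' : ℤ) :
    bumpRatio f c r b = bumpRatio f c r b' := by
  have harc : arcPair r c r b = arcPair r c r b' := by simp [arcPair]
  rw [bumpRatio, bumpRatio, harc]

theorem bumpRatio_left_zero (f : ℤ → Fin r → F) (c : ℤ) {b : ℤ} (hb : 0 < b) :
    bumpRatio f c 0 b = 0 := by
  rw [bumpRatio, minor_bump_arcPair_of_left_eq_zero f c hb, zero_div]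

theorem bumpRatio_gap_zero (f : ℤ → Fin r → F) (c : ℤ) {a : ℤ} (ha : 0 < a) (har : a < r) :
    bumpRatio f c a 0 = 0 := by
  rw [bumpRatio, minor_bump_arcPair_of_gap_eq_zero f c ha har, zero_div]

variable {f : ℤ → Fin r → F} {c a b : ℤ}

theorem bumpRatio_left_succ_sub (ha : 0 ≤ a) (har : a < r) (hb : 0 < b)
    (h : minor f (arcPair r c a b) ≠ 0) (h' : minor f (arcPair r c (a + 1) b) ≠ 0) :
    bumpRatio f c (a + 1) b - bumpRatio f c a b =
      minor f (arcPair r (c - 1) a (b + 1)) * minor f (arcPair r (c + 1) (a + 1) (b - 1)) /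
        (minor f (arcPair r c a b) * minor f (arcPair r c (a + 1) b)) := by
  rw [← minor_bump_arcPair_left_succ f c ha har hb, bumpRatio, bumpRatio]
  field_simp

theorem bumpRatio_sub_gap_pred (ha : 0 < a) (har : a < r) (hb : 0 < b)
    (h : minor f (arcPair r c a (b - 1)) ≠ 0) (h' : minor f (arcPair r c a b) ≠ 0) :
    bumpRatio f c a b - bumpRatio f c a (b - 1) =
      minor f (arcPair r (c - 1) (a - 1) b) * minor f (arcPair r (c + 1) (a + 1) (b - 1)) /
        (minor f (arcPair r c a (b - 1)) * minor f (arcPair r c a b)) := by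
  rw [← minor_bump_arcPair_gap_pred f c ha har hb, bumpRatio, bumpRatio]
  field_simp

end Field

end ArcPair

section CyclicSets

variable {n k : ℕ}

theorem image_intCast_Ioc_add_period (x y : ℤ) :
    (Ioc (x + n) (y + n)).image (Int.cast : ℤ → ZMod n) = (Ioc x y).image Int.cast := by
  rw [← image_add_right_Ioc, image_image]
  exact image_congr fun t _ ↦ by simp

theorem injOn_intCast_Ioc (m : ℤ) :
    Set.InjOn (Int.cast : ℤ → ZMod n) (Ioc m (m + n) : Finset ℤ) := by
  intro s hs t ht hst
  rw [coe_Ioc, Set.mem_Ioc] at hs ht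
  have hdvd := (ZMod.intCast_eq_intCast_iff_dvd_sub s t n).1 hst
  have := Int.eq_zero_of_abs_lt_dvd hdvd (by rw [abs_lt]; omega)
  omega

theorem injOn_natCast_Icc (n : ℕ) : Set.InjOn (Nat.cast : ℕ → ZMod n) (Icc 1 n : Finset ℕ) := by
  intro i hi j hj hij
  rw [coe_Icc, Set.mem_Icc] at hi hj
  have hcast : ((i : ℤ) : ZMod n) = (j : ℤ) := by simpa only [Int.cast_natCast] using hij
  have := injOn_intCast_Ioc 0 (by rw [coe_Ioc, Set.mem_Ioc]; omega)
    (by rw [coe_Ioc, Set.mem_Ioc]; omega) hcast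
  omega

theorem image_intCast_bump {S : Finset ℤ} {m c : ℤ} (hS : S ⊆ Ioc m (m + n)) (hc : c ∈ S) :
    (bump S c).image (Int.cast : ℤ → ZMod n) =
      insert ((c : ZMod n) + 1) ((S.image Int.cast).erase (c : ZMod n)) := by
  have herase : (S.erase c).image Int.cast = (S.image Int.cast).erase (c : ZMod n) := by
    rw [erase_eq, erase_eq, image_sdiff_of_injOn ((injOn_intCast_Ioc m).mono (coe_subset.2 hS))
      (singleton_subset_iff.2 hc), image_singleton]
  rw [bump, image_insert, herase, Int.cast_add, Int.cast_one]

theorem image_intCast_arcPair_eq_rotate (hk : k ≤ n) (c a b : ℤ) :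
    (arcPair (n - k) c a b).image (Int.cast : ℤ → ZMod n) =
      (arcPair (n - k) (c + b + (n - k) - a) (n - k - a) (k - b)).image Int.cast := by
  rw [arcPair, arcPair, image_union, image_union, union_comm,
    ← image_intCast_Ioc_add_period (c - a)]
  push_cast [hk]
  congr! 3 <;> ring

theorem image_natCast_Icc_add (m : ℤ) (l : ℕ) :
    (Icc 1 l).image (fun t : ℕ ↦ (m : ZMod n) + t) = (Ioc m (m + l)).image Int.cast := by
  ext x
  simp only [mem_image, mem_Icc, mem_Ioc]
  constructor
  · rintro ⟨t, ht, rfl⟩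
    exact ⟨m + t, by omega, by simp⟩
  · rintro ⟨t, ht, rfl⟩
    exact ⟨(t - m).toNat, by omega, by
      rw [← Int.cast_natCast, Int.toNat_of_nonneg (by omega), ← Int.cast_add, add_sub_cancel]⟩

theorem seg_eq_image_Ioc (m : ℕ) : seg n m = (Ioc 0 (m : ℤ)).image Int.cast := by
  simpa [seg] using image_natCast_Icc_add (n := n) 0 m

theorem Jch_eq_image_arcPair {a b : ℕ} (hk : k ≤ n) (ha : a ≤ n - k) (hb : b ≤ k) :
    Jch k n a b = (arcPair (n - k) ((a - b) / 2) a b).image Int.cast := by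
  have hsdiff : seg n (n - k + b) \ seg n (a + b) =
      (Ioc ((a + b : ℕ) : ℤ) (n - k + b : ℕ)).image Int.cast := by
    rw [seg_eq_image_Ioc, seg_eq_image_Ioc, ← image_sdiff_of_injOn]
    · congr 1
      ext t
      simp only [mem_sdiff, mem_Ioc]
      omega
    · exact (injOn_intCast_Ioc 0).mono (coe_subset.2 (Ioc_subset_Ioc_right (by omega)))
    · exact Ioc_subset_Ioc_right (by omega)
  have hshift : arcPair (n - k) ((a - b) / 2) a b =
      (Ioc 0 (a : ℤ) ∪ Ioc ((a + b : ℕ) : ℤ) (n - k + b : ℕ)).image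
        (· + -(((a + b + 1) / 2 : ℕ) : ℤ)) := by
    rw [image_union, image_add_right_Ioc, image_add_right_Ioc, arcPair]
    congr 2 <;> omega
  rw [Jch, hsdiff, seg_eq_image_Ioc, ← image_union, hshift, image_image, image_image]
  exact image_congr fun t _ ↦ by
    simp only [Function.comp_apply, sub_eq_add_neg, Int.cast_add, Int.cast_neg, Int.cast_natCast]

theorem Jcyc_eq_image_Ioc (hk : k ≤ n) (c : ℤ) :
    Jcyc n k (c + k) = (Ioc (c - (n - k : ℕ)) c).image Int.cast := by
  have hwindow : Ioc (c + k) (c + k + (n - k : ℕ)) = Ioc (c - (n - k : ℕ) + n) (c + n) := by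
    congr 1 <;> omega
  rw [← image_intCast_Ioc_add_period, ← hwindow, ← image_natCast_Icc_add, Jcyc]
  simp

theorem image_intCast_arcPair_of_gap_eq (hk : k ≤ n) (c : ℤ) {a : ℤ} (ha : 0 ≤ a)
    (har : a ≤ (n - k : ℕ)) : (arcPair (n - k) c a k).image Int.cast = Jcyc n k (c + k) := by
  have hsecond : Ioc (c + k) (c + k + (n - k : ℕ) - a) = Ioc (c + k - n + n) (c - a + n) := by
    congr 1 <;> omega
  rw [Jcyc_eq_image_Ioc hk, arcPair, image_union, hsecond, image_intCast_Ioc_add_period,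
    ← image_union]
  congr 1
  ext t
  simp only [mem_union, mem_Ioc]
  omega

theorem Jplus_eq_insert_erase (hk : k ≤ n) (c : ℤ) :
    Jplus n k (c + k) = insert ((c : ZMod n) + 1) ((Jcyc n k (c + k)).erase (c : ZMod n)) := by
  simp [Jplus, hk, add_assoc]

end CyclicSets

section SuperpotentialTerm

variable {n k : ℕ} [NeZero n] (A : Matrix (Fin (n - k)) (ZMod n) ℂ)

/-- The summand `p_{J_i⁺}(A) / p_{J_i}(A)` of the superpotential. -/
noncomputable def superpotentialTerm {n k : ℕ} (A : Matrix (Fin (n - k)) (ZMod n) ℂ)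
    (i : ZMod n) : ℂ :=
  plucker n (n - k) A (Jplus n k i) / plucker n (n - k) A (Jcyc n k i)

theorem minor_twistedColumn_arcPair (hk : k ≤ n) {c a b : ℤ} (ha : 0 ≤ a) (har : a ≤ (n - k : ℕ))
    (hb : 0 ≤ b) (hbk : b ≤ k) :
    minor (twistedColumn A) (arcPair (n - k) c a b) =
      plucker n (n - k) A ((arcPair (n - k) c a b).image Int.cast) :=
  minor_twistedColumn_eq_plucker A (c - a) fun t ↦ by rw [mem_arcPair, mem_Ioc]; omega

theorem minor_twistedColumn_arcPair_of_gap_eq (hk : k ≤ n) (c : ℤ) {a : ℤ} (ha : 0 ≤ a)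
    (har : a ≤ (n - k : ℕ)) :
    minor (twistedColumn A) (arcPair (n - k) c a k) = plucker n (n - k) A (Jcyc n k (c + k)) := by
  rw [minor_twistedColumn_arcPair A hk ha har (by omega) le_rfl,
    image_intCast_arcPair_of_gap_eq hk c ha har]

theorem minor_twistedColumn_bump_arcPair_of_gap_eq (hk : k ≤ n) (hk0 : 0 < k) (c : ℤ) {a : ℤ}
    (ha : 0 < a) (har : a ≤ (n - k : ℕ)) :
    minor (twistedColumn A) (bump (arcPair (n - k) c a k) c) =
      plucker n (n - k) A (Jplus n k (c + k)) := by
  have hsub : arcPair (n - k) c a k ⊆ Ioc (c - a) (c - a + n) := fun t ↦ by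
    rw [mem_arcPair, mem_Ioc]; omega
  have hsub' : bump (arcPair (n - k) c a k) c ⊆ Ioc (c - a) (c - a + n) := fun t ↦ by
    rw [mem_bump, mem_arcPair, mem_Ioc]; omega
  have hc : c ∈ arcPair (n - k) c a k := by rw [mem_arcPair]; omega
  rw [minor_twistedColumn_eq_plucker A _ hsub', image_intCast_bump hsub hc,
    image_intCast_arcPair_of_gap_eq hk c ha.le har, Jplus_eq_insert_erase hk]

theorem bumpRatio_twistedColumn_of_gap_eq (hk : k ≤ n) (hk0 : 0 < k) (c : ℤ) {a : ℤ} (ha : 0 < a)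
    (har : a ≤ (n - k : ℕ)) :
    bumpRatio (twistedColumn A) c a k = superpotentialTerm A (c + k) := by
  rw [bumpRatio, superpotentialTerm, minor_twistedColumn_bump_arcPair_of_gap_eq A hk hk0 c ha har,
    minor_twistedColumn_arcPair_of_gap_eq A hk c ha.le har]

end SuperpotentialTerm

section CheckboardSums

variable {n k : ℕ}

/-- The minors indexed like the checkboard coordinates, with the gap of the arc pair shifted by half
of `e`: on the columns of `A`, the offset `e = 0` gives `y_{a,b}` and the offset `e = n` gives the
reflected coordinates `y_{n-k-a,k-b}`. -/
noncomputable def checkboardMinor {R : Type*} [CommRing R] {r : ℕ} (f : ℤ → Fin r → R) (e : ℤ)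
    (a b : ℕ) : R :=
  minor f (arcPair r ((e + a - b) / 2) a b)

theorem sumA_congr {y z : ℕ → ℕ → ℂ} (hyz : ∀ a ≤ n - k, ∀ b ≤ k, y a b = z a b) (d : ℤ) :
    sumA k n y d = sumA k n z d := by
  refine sum_congr rfl fun p hp ↦ ?_
  simp only [mem_filter, mem_product, mem_range, mem_Icc] at hp
  rw [hyz, hyz, hyz, hyz] <;> omega

theorem sumB_congr {y z : ℕ → ℕ → ℂ} (hyz : ∀ a ≤ n - k, ∀ b ≤ k, y a b = z a b) (d : ℤ) :
    sumB k n y d = sumB k n z d := by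
  refine sum_congr rfl fun p hp ↦ ?_
  simp only [mem_filter, mem_product, mem_Icc] at hp
  rw [hyz, hyz, hyz, hyz] <;> omega

theorem sumA_reflect (hk : k ≤ n) (y : ℕ → ℕ → ℂ) (d : ℤ) :
    sumA k n (fun a b ↦ y (n - k - a) (k - b)) (n - 2 * k - 1 - d) = sumA k n y d := by
  refine sum_nbij' (fun p ↦ (n - k - 1 - p.1, k - p.2)) (fun p ↦ (n - k - 1 - p.1, k - p.2))
    ?_ ?_ ?_ ?_ ?_ <;>
  simp only [mem_filter, mem_product, mem_range, mem_Icc, Prod.forall, Prod.mk.injEq]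
  any_goals omega
  rintro a b ⟨⟨ha, hb⟩, -⟩
  rw [show n - k - (a + 1) = n - k - 1 - a by omega, show n - k - a = n - k - 1 - a + 1 by omega,
    show k - (b + 1) = k - b - 1 by omega, show k - (b - 1) = k - b + 1 by omega]
  ring

theorem sumB_reflect (hk : k ≤ n) (y : ℕ → ℕ → ℂ) (d : ℤ) :
    sumB k n (fun a b ↦ y (n - k - a) (k - b)) (n - 2 * k - 1 - d) = sumB k n y d := by
  refine sum_nbij' (fun p ↦ (n - k - p.1, k + 1 - p.2)) (fun p ↦ (n - k - p.1, k + 1 - p.2))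
    ?_ ?_ ?_ ?_ ?_ <;>
  simp only [mem_filter, mem_product, mem_Icc, Prod.forall, Prod.mk.injEq]
  any_goals omega
  rintro a b ⟨⟨ha, hb⟩, -⟩
  rw [show n - k - (a - 1) = n - k - a + 1 by omega, show n - k - (a + 1) = n - k - a - 1 by omega,
    show k - (b - 1) = k + 1 - b by omega, show k - b = k + 1 - b - 1 by omega]
  ring

/-- The intermediate values of the telescoping sum along the diagonal `a - b = d`, indexed by
`s = a + b`: increasing `s` by one alternately increases `a` and `b`. -/
noncomputable def diagonalRatio {r : ℕ} (f : ℤ → Fin r → ℂ) (c d s : ℤ) : ℂ :=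
  bumpRatio f c ((s + d + 1) / 2) ((s - d) / 2)

theorem sumA_checkboardMinor {f : ℤ → Fin (n - k) → ℂ} {e c d : ℤ} (hc : e + d = 2 * c)
    (hf : ∀ a ≤ n - k, ∀ b ≤ k, checkboardMinor f e a b ≠ 0) :
    sumA k n (checkboardMinor f e) d =
      ∑ p ∈ (range (n - k) ×ˢ Icc 1 (k - 1)).filter (fun p ↦ (p.1 : ℤ) - p.2 = d),
        (diagonalRatio f c d (p.1 + p.2 + 1) - diagonalRatio f c d (p.1 + p.2)) := by
  refine sum_congr rfl fun ⟨a, b⟩ hp ↦ ?_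
  simp only [mem_filter, mem_product, mem_range, mem_Icc] at hp
  have h := hf a (by omega) b (by omega)
  have h' := hf (a + 1) (by omega) b (by omega)
  have hcenter : (e + a - b) / 2 = c := by omega
  have hcenter_left : (e + (a + 1 : ℕ) - b) / 2 = c := by omega
  have hcenter_gap : (e + a - (b + 1 : ℕ)) / 2 = c - 1 := by omega
  have hcenter_both : (e + (a + 1 : ℕ) - (b - 1 : ℕ)) / 2 = c + 1 := by omega
  simp only [checkboardMinor, hcenter, hcenter_left, hcenter_gap, hcenter_both] at h h' ⊢
  push_cast [hp.1.2.1] at h h' ⊢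
  rw [← bumpRatio_left_succ_sub (by omega) (by omega) (by omega) h h', diagonalRatio, diagonalRatio]
  congr 2 <;> omega

theorem sumB_checkboardMinor {f : ℤ → Fin (n - k) → ℂ} {e c d : ℤ} (hc : e + d = 2 * c)
    (hf : ∀ a ≤ n - k, ∀ b ≤ k, checkboardMinor f e a b ≠ 0) :
    sumB k n (checkboardMinor f e) d =
      ∑ p ∈ (Icc 1 (n - k - 1) ×ˢ Icc 1 k).filter (fun p ↦ (p.1 : ℤ) - p.2 = d),
        (diagonalRatio f c d (p.1 + p.2 - 1 + 1) - diagonalRatio f c d (p.1 + p.2 - 1)) := by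
  refine sum_congr rfl fun ⟨a, b⟩ hp ↦ ?_
  simp only [mem_filter, mem_product, mem_Icc] at hp
  have h := hf a (by omega) (b - 1) (by omega)
  have h' := hf a (by omega) b (by omega)
  have hcenter : (e + a - b) / 2 = c := by omega
  have hcenter_left : (e + (a - 1 : ℕ) - b) / 2 = c - 1 := by omega
  have hcenter_gap : (e + a - (b - 1 : ℕ)) / 2 = c := by omega
  have hcenter_both : (e + (a + 1 : ℕ) - (b - 1 : ℕ)) / 2 = c + 1 := by omega
  simp only [checkboardMinor, hcenter, hcenter_left, hcenter_gap, hcenter_both] at h h' ⊢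
  push_cast [hp.1.2.1, hp.1.1.1] at h h' ⊢
  rw [← bumpRatio_sub_gap_pred (by omega) (by omega) (by omega) h h', diagonalRatio, diagonalRatio]
  congr 2 <;> omega

theorem diagonalRatio_max_eq_zero {r : ℕ} (f : ℤ → Fin r → ℂ) (c : ℤ) {d : ℤ} (hd : d + 1 < r) :
    diagonalRatio f c d (max (d + 1) (-d)) = 0 := by
  obtain hneg | hnonneg := lt_or_ge d 0
  · rw [diagonalRatio, show (max (d + 1) (-d) + d + 1) / 2 = 0 by omega]
    exact bumpRatio_left_zero f c (by omega)
  · rw [diagonalRatio, show (max (d + 1) (-d) - d) / 2 = 0 by omega]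
    exact bumpRatio_gap_zero f c (by omega) (by omega)

section Superpotential

variable [NeZero n] (A : Matrix (Fin (n - k)) (ZMod n) ℂ)

theorem ych_eq_checkboardMinor (hk : k ≤ n) {a b : ℕ} (ha : a ≤ n - k) (hb : b ≤ k) :
    ych k n A a b = checkboardMinor (twistedColumn A) 0 a b := by
  rw [ych, Jch_eq_image_arcPair hk ha hb, checkboardMinor, zero_add,
    minor_twistedColumn_arcPair A hk] <;> omega

theorem ych_sub_sub_eq_checkboardMinor (hk : k ≤ n) {a b : ℕ} (ha : a ≤ n - k) (hb : b ≤ k) :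
    ych k n A (n - k - a) (k - b) = checkboardMinor (twistedColumn A) n a b := by
  rw [ych, Jch_eq_image_arcPair hk (Nat.sub_le _ _) (Nat.sub_le _ _), checkboardMinor,
    image_intCast_arcPair_eq_rotate hk, minor_twistedColumn_arcPair A hk]
  · congr! 3 <;> omega
  all_goals omega

theorem diagonalRatio_min_eq_superpotentialTerm (hk : k < n) (hk0 : 0 < k) (c : ℤ) {d : ℤ}
    (hd : -(k : ℤ) < d) :
    diagonalRatio (twistedColumn A) c d (min (2 * k + d) (2 * (n - k : ℕ) - d - 1)) =
      superpotentialTerm A (c + k) := by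
  obtain hgap | hleft := le_total (2 * k + d) (2 * (n - k : ℕ) - d - 1)
  · rw [diagonalRatio, min_eq_left hgap, show (2 * k + d - d) / 2 = (k : ℤ) by omega]
    exact bumpRatio_twistedColumn_of_gap_eq A hk.le hk0 c (by omega) (by omega)
  · rw [diagonalRatio, min_eq_right hleft,
      show (2 * ((n - k : ℕ) : ℤ) - d - 1 + d + 1) / 2 = (n - k : ℕ) by omega,
      bumpRatio_left_eq _ _ _ k]
    exact bumpRatio_twistedColumn_of_gap_eq A hk.le hk0 c (by omega) le_rfl

theorem sumA_add_sumB_checkboardMinor (hk : k < n) (hk0 : 0 < k) {e c d : ℤ} (hc : e + d = 2 * c)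
    (hd : -(k : ℤ) < d) (hd' : d + 1 < (n - k : ℕ))
    (hA : ∀ a ≤ n - k, ∀ b ≤ k, checkboardMinor (twistedColumn A) e a b ≠ 0) :
    sumA k n (checkboardMinor (twistedColumn A) e) d +
      sumB k n (checkboardMinor (twistedColumn A) e) d = superpotentialTerm A (c + k) := by
  rw [sumA_checkboardMinor hc hA, sumB_checkboardMinor hc hA,
    sum_diagonal_add_sum_diagonal_eq_sub _ (by omega) hk0 hd.le (by omega),
    diagonalRatio_min_eq_superpotentialTerm A hk hk0 c hd, diagonalRatio_max_eq_zero _ c hd',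
    sub_zero]

theorem checkboardMinor_div_checkboardMinor (hk : k < n) (hk0 : 0 < k) (e : ℤ) :
    checkboardMinor (twistedColumn A) e 1 (k - 1) / checkboardMinor (twistedColumn A) e 0 k =
      superpotentialTerm A (((e - k) / 2 : ℤ) + k) := by
  have hbump : arcPair (n - k) ((e + (1 : ℕ) - (k - 1 : ℕ)) / 2) (1 : ℕ) (k - 1 : ℕ) =
      bump (arcPair (n - k) ((e - k) / 2) 1 k) ((e - k) / 2) := by
    ext t
    simp only [mem_bump, mem_arcPair]
    omega
  rw [checkboardMinor, checkboardMinor, hbump, Nat.cast_zero, add_zero, superpotentialTerm,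
    minor_twistedColumn_bump_arcPair_of_gap_eq A hk.le hk0 _ one_pos (by omega),
    minor_twistedColumn_arcPair_of_gap_eq A hk.le _ le_rfl (by omega)]

end Superpotential

end CheckboardSums

section DiagonalIndex

variable {n k : ℕ}

/-- The index `i ∈ ℤ/nℤ` of the summand `p_{J_i⁺} / p_{J_i}` of the superpotential carried by the
diagonal `a - b = d` of the checkboard graph. -/
def diagonalIndex (n k : ℕ) (d : ℤ) : ZMod n :=
  ((if Even d then d / 2 + k else -((d + 1) / 2) : ℤ) : ZMod n)

theorem diagonalIndex_of_even {d : ℤ} (hd : Even d) :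
    diagonalIndex n k d = (d / 2 : ℤ) + k := by
  rw [diagonalIndex, if_pos hd, Int.cast_add, Int.cast_natCast]

theorem diagonalIndex_of_not_even {d : ℤ} (hd : ¬ Even d) :
    diagonalIndex n k d = (n - k - (d + 1) / 2 : ℤ) + k := by
  rw [diagonalIndex, if_neg hd]
  push_cast [ZMod.natCast_self]
  ring

theorem diagonalIndex_zero (n k : ℕ) : diagonalIndex n k 0 = k := by
  simp [diagonalIndex]

theorem diagonalIndex_neg : diagonalIndex n k (-k) = ((0 - k) / 2 : ℤ) + k := by
  have hvalue : (if Even (-(k : ℤ)) then -(k : ℤ) / 2 + k else -((-(k : ℤ) + 1) / 2)) =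
      (0 - k) / 2 + k := by
    split_ifs with h <;> rw [Int.even_iff] at h <;> omega
  rw [diagonalIndex, hvalue, Int.cast_add, Int.cast_natCast]

theorem diagonalIndex_sub_sub_one :
    diagonalIndex n k (n - k - 1) = ((n - k) / 2 : ℤ) + k := by
  obtain heven | hodd := em (Even ((n : ℤ) - k - 1))
  · have hhalf : ((n : ℤ) - k - 1) / 2 = (n - k) / 2 := by rw [Int.even_iff] at heven; omega
    rw [diagonalIndex_of_even heven, hhalf]
  · have hhalf : (n : ℤ) - k - (n - k - 1 + 1) / 2 = (n - k) / 2 := by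
      rw [Int.not_even_iff] at hodd; omega
    rw [diagonalIndex_of_not_even hodd, hhalf]

theorem injOn_diagonalIndex (n k : ℕ) :
    Set.InjOn (diagonalIndex n k) (Icc (-(k : ℤ)) (n - k - 1) : Finset ℤ) := by
  intro d hd d' hd' hdd'
  rw [coe_Icc, Set.mem_Icc] at hd hd'
  rw [diagonalIndex, diagonalIndex, ZMod.intCast_eq_intCast_iff_dvd_sub] at hdd'
  have := Int.eq_zero_of_abs_lt_dvd hdd' (by simp only [abs_lt, Int.even_iff]; grind)
  grind

theorem sum_natCast_Icc_eq_sum_diagonalIndex {M : Type*} [AddCommMonoid M] [NeZero n] (k : ℕ)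
    (F : ZMod n → M) :
    ∑ i ∈ Icc 1 n, F i = ∑ d ∈ Icc (-(k : ℤ)) (n - k - 1), F (diagonalIndex n k d) := by
  rw [sum_comp_eq_sum_univ (injOn_natCast_Icc n) (by simp),
    sum_comp_eq_sum_univ (injOn_diagonalIndex n k) (by rw [Int.card_Icc, ZMod.card]; omega)]

end DiagonalIndex

section Superpotential

variable {n k : ℕ} (A : Matrix (Fin (n - k)) (ZMod n) ℂ)

theorem sumA_add_sumB_ych [NeZero n] (hk : k < n) (hk0 : 0 < k)
    (hy : ∀ i ≤ n - k, ∀ j ≤ k, ych k n A i j ≠ 0) {d : ℤ} (hd : -(k : ℤ) < d)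
    (hd' : d < n - k - 1) :
    sumA k n (ych k n A) d + sumB k n (ych k n A) d =
      superpotentialTerm A (diagonalIndex n k d) := by
  obtain heven | hodd := em (Even d)
  · have hych (a : ℕ) (ha : a ≤ n - k) (b : ℕ) (hb : b ≤ k) :=
      ych_eq_checkboardMinor A hk.le ha hb
    rw [diagonalIndex_of_even heven, sumA_congr hych, sumB_congr hych]
    refine sumA_add_sumB_checkboardMinor A hk hk0 ?_ hd (by omega)
      fun a ha b hb ↦ hych a ha b hb ▸ hy a ha b hb
    rw [zero_add, Int.two_mul_ediv_two_of_even heven]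
  · have hych (a : ℕ) (ha : a ≤ n - k) (b : ℕ) (hb : b ≤ k) :=
      ych_sub_sub_eq_checkboardMinor A hk.le ha hb
    rw [diagonalIndex_of_not_even hodd, ← sumA_reflect hk.le, ← sumB_reflect hk.le,
      sumA_congr hych, sumB_congr hych]
    refine sumA_add_sumB_checkboardMinor A hk hk0 ?_ (by omega) (by omega)
      fun a ha b hb ↦ hych a ha b hb ▸ hy _ (Nat.sub_le _ _) _ (Nat.sub_le _ _)
    rw [Int.not_even_iff] at hodd
    omega

theorem ych_one_div_ych_zero [NeZero n] (hk : k < n) (hk0 : 0 < k) :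
    ych k n A 1 (k - 1) / ych k n A 0 k = superpotentialTerm A (diagonalIndex n k (-k)) := by
  rw [ych_eq_checkboardMinor A hk.le (by omega) (by omega),
    ych_eq_checkboardMinor A hk.le (by omega) le_rfl, checkboardMinor_div_checkboardMinor A hk hk0,
    diagonalIndex_neg]

theorem ych_sub_one_div_ych_sub [NeZero n] (hk : k < n) (hk0 : 0 < k) :
    ych k n A (n - k - 1) 1 / ych k n A (n - k) 0 =
      superpotentialTerm A (diagonalIndex n k (n - k - 1)) := by
  have hnum := ych_sub_sub_eq_checkboardMinor A hk.le (a := 1) (b := k - 1) (by omega) (by omega)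
  have hden := ych_sub_sub_eq_checkboardMinor A hk.le (a := 0) (b := k) (by omega) le_rfl
  rw [Nat.sub_sub_self hk0] at hnum
  rw [Nat.sub_zero, Nat.sub_self] at hden
  rw [hnum, hden, checkboardMinor_div_checkboardMinor A hk hk0, diagonalIndex_sub_sub_one]

end Superpotential

theorem superpotential_checkboard_general (n k : ℕ) (hk : 1 ≤ k) (hkn : k + 2 ≤ n)
    (A : Matrix (Fin (n - k)) (ZMod n) ℂ) (hy : ∀ i ≤ n - k, ∀ j ≤ k, ych k n A i j ≠ 0) (q : ℂ) :
    (∑ i ∈ Icc 1 n,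
        (plucker n (n - k) A (Jplus n k (i : ZMod n)) /
          plucker n (n - k) A (Jcyc n k (i : ZMod n))) * q ^ (if i = k then 1 else 0)) =
      ych k n A 1 (k - 1) / ych k n A 0 k +
      ych k n A (n - k - 1) 1 / ych k n A (n - k) 0 +
      ∑ d ∈ Icc (1 - (k : ℤ)) ((n : ℤ) - k - 2),
        (sumA k n (ych k n A) d + sumB k n (ych k n A) d) * q ^ (if d = 0 then 1 else 0) := by
  have : NeZero n := ⟨by omega⟩
  let W (x : ZMod n) : ℂ := superpotentialTerm A x * q ^ (if x = k then 1 else 0)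
  have hW (d : ℤ) (hd : d ∈ Icc (-(k : ℤ)) (n - k - 1)) : W (diagonalIndex n k d) =
      superpotentialTerm A (diagonalIndex n k d) * q ^ (if d = 0 then 1 else 0) := by
    have hzero : (0 : ℤ) ∈ Icc (-(k : ℤ)) (n - k - 1) := by rw [mem_Icc]; omega
    simp only [W, ← diagonalIndex_zero n k, (injOn_diagonalIndex n k).eq_iff hd hzero]
  calc
    _ = ∑ i ∈ Icc 1 n, W i := sum_congr rfl fun i hi ↦ by
      have hk' : k ∈ Icc 1 n := by rw [mem_Icc]; omega
      simp only [W, superpotentialTerm, (injOn_natCast_Icc n).eq_iff hi hk']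
    _ = W (diagonalIndex n k (-k)) + W (diagonalIndex n k (n - k - 1)) +
        ∑ d ∈ Icc (-(k : ℤ) + 1) (n - k - 1 - 1), W (diagonalIndex n k d) := by
      rw [sum_natCast_Icc_eq_sum_diagonalIndex k, sum_Icc_eq_add_add_sum_Icc _ (by omega)]
    _ = _ := by
      rw [hW _ (by rw [mem_Icc]; omega), hW _ (by rw [mem_Icc]; omega), if_neg (by omega),
        if_neg (by omega), pow_zero, mul_one, mul_one, ← ych_one_div_ych_zero A (by omega) hk,
        ← ych_sub_one_div_ych_sub A (by omega) hk, neg_add_eq_sub, sub_sub (_ - _),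
        one_add_one_eq_two]
      refine congrArg _ (sum_congr rfl fun d hd ↦ ?_)
      rw [mem_Icc] at hd
      rw [hW d (by rw [mem_Icc]; omega), sumA_add_sumB_ych A (by omega) hk hy] <;> omega

/-- the superpotential of the Grassmannian, expressed in the Plücker
coordinates attached to the checkboard graph `G^ch_{k,n}`. -/
theorem superpotential_checkboard
    (n k : ℕ) (hn : 4 ≤ n) (hk : 2 ≤ k) (hkn : k ≤ n - 2)
    (A : Matrix (Fin (n - k)) (ZMod n) ℂ)
    (hy : ∀ i ≤ n - k, ∀ j ≤ k, ych k n A i j ≠ 0)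
    (q : ℂ) :
    (∑ i ∈ Finset.Icc 1 n,
        (plucker n (n - k) A (Jplus n k (i : ZMod n)) /
          plucker n (n - k) A (Jcyc n k (i : ZMod n))) * q ^ (if i = k then 1 else 0)) =
      ych k n A 1 (k - 1) / ych k n A 0 k +
      ych k n A (n - k - 1) 1 / ych k n A (n - k) 0 +
      ∑ d ∈ Finset.Icc (1 - (k : ℤ)) ((n : ℤ) - k - 2),
        (sumA k n (ych k n A) d + sumB k n (ych k n A) d) * q ^ (if d = 0 then 1 else 0) :=
  superpotential_checkboard_general n k (by omega) (by omega) A hy q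
end
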